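/- arXiv:1809.01313 — 2 statements merged into one kernel-verified Lean document; each statement's English description precedes it below -/
import Mathlib

section
/- If f is analytic on the unit disk and belongs to the Hardy space H^p for some 0 < p < ∞, then the integral of |f(x)|^p over the real segment from -1 to 1 is at most half the integral of |f(e^{iθ})|^p over θ in [0, 2π], where f(e^{iθ}) denotes the radial limit of f. -/
open Complex MeasureTheory Real Filter

open Metric Set
open scoped ComplexConjugate Topology

/-!
For the exponent `2`, Cauchy's theorem on the upper half disk moves the integral of
`h z * conj (h (conj z))` from the diameter, where the integrand is `‖h x‖ ^ 2`, to the
semicircle, where it is at most the mean of `‖h‖ ^ 2` at two conjugate points.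

For an exponent `q`, dividing `f` by its Blaschke factors keeps `‖f‖` on the circle, does not
decrease it inside, and leaves a function `g` without zeros in the open disk; the case above applies
to `h = g ^ (q / 2)`.

For `q < p`, the means of order `p` make `‖f (r * exp (θ * I))‖ ^ q` uniformly integrable in `θ`,
so its integral converges to that of the radial limit as `r → 1`, and no convergence of dilations
in `H^p` is needed. Finally `q → p`, by dominated convergence on the circle and Fatou's lemma on
the diameter.
-/

section Quadratic

lemma differentiableOn_mul_conj_comp_conj {R : ℝ} {h : ℂ → ℂ}
    (hh : DifferentiableOn ℂ h (ball 0 R)) :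
    DifferentiableOn ℂ (fun z => h z * conj (h (conj z))) (ball 0 R) := by
  refine hh.mul fun z hz => DifferentiableAt.differentiableWithinAt ?_
  have hconj : DifferentiableAt ℂ h (conj z) :=
    hh.differentiableAt (isOpen_ball.mem_nhds (by simpa using hz))
  simpa [Function.comp_def] using hconj.conj_conj

lemma integral_diameter_eq_neg_integral_semicircle {E : Type*} [NormedAddCommGroup E]
    [NormedSpace ℂ E] [CompleteSpace E] {k : ℂ → E} {r R : ℝ} (hr : 0 ≤ r) (hrR : r < R)
    (hk : DifferentiableOn ℂ k (ball 0 R)) :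
    ∫ x in (-r)..r, k x = -∫ θ in 0..π, deriv (circleMap 0 r) θ • k (circleMap 0 r θ) := by
  obtain ⟨K, hK⟩ := hk.isExactOn_ball
  have hseg : ∀ x ∈ uIcc (-r) r, (x : ℂ) ∈ ball 0 R := fun x hx => by
    rw [uIcc_of_le (by linarith)] at hx
    simpa using (abs_le.2 hx).trans_lt hrR
  have hcirc : ∀ θ, circleMap 0 r θ ∈ ball 0 R := fun θ => by simpa [abs_of_nonneg hr] using hrR
  have hdiam : ∫ x in (-r)..r, k x = K r - K (-r) := by
    rw [intervalIntegral.integral_eq_sub_of_hasDerivAt (f := fun x : ℝ => K x)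
      (f' := fun x : ℝ => k x) (fun x hx => ?_)
      (hk.continuousOn.comp (by fun_prop) hseg).intervalIntegrable, ofReal_neg]
    simpa [Function.comp_def] using (hK x (hseg x hx)).scomp x ofRealCLM.hasDerivAt
  have harc : ∫ θ in 0..π, deriv (circleMap 0 r) θ • k (circleMap 0 r θ) = K (-r) - K r := by
    have hcont : Continuous fun θ => deriv (circleMap 0 r) θ • k (circleMap 0 r θ) := by
      simp only [deriv_circleMap]
      exact (by fun_prop : Continuous _).smul
        (hk.continuousOn.comp_continuous (continuous_circleMap 0 r) hcirc)
    rw [intervalIntegral.integral_eq_sub_of_hasDerivAt (f := fun θ => K (circleMap 0 r θ))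
      (fun θ _ => (hK _ (hcirc θ)).scomp θ (differentiable_circleMap 0 r θ).hasDerivAt)
      (hcont.intervalIntegrable _ _)]
    simp [circleMap_zero]
  rw [hdiam, harc, neg_sub]

lemma intervalIntegral_add_comp_neg_of_periodic {E : Type*} [NormedAddCommGroup E]
    [NormedSpace ℝ E] {φ : ℝ → E} {a : ℝ} (hφ : Function.Periodic φ (2 * a))
    (hint : ∀ b c, IntervalIntegrable φ volume b c) :
    ∫ θ in 0..a, (φ θ + φ (-θ)) = ∫ θ in 0..2 * a, φ θ := by
  have hneg : IntervalIntegrable (fun θ => φ (-θ)) volume 0 a :=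
    (IntervalIntegrable.iff_comp_neg (by simp)).2 (by simpa using hint 0 (-a))
  have hshift := hφ.intervalIntegral_add_eq (-a) 0
  rw [show -a + 2 * a = a by ring, zero_add] at hshift
  rw [intervalIntegral.integral_add (hint 0 a) hneg, intervalIntegral.integral_comp_neg, neg_zero,
    add_comm, intervalIntegral.integral_add_adjacent_intervals (hint _ _) (hint _ _), hshift]

theorem integral_norm_sq_diameter_le {h : ℂ → ℂ} {r R : ℝ} (hr : 0 ≤ r) (hrR : r < R)
    (hh : DifferentiableOn ℂ h (ball 0 R)) :
    ∫ x in (-r)..r, ‖h x‖ ^ 2 ≤ r / 2 * ∫ θ in 0..2 * π, ‖h (circleMap 0 r θ)‖ ^ 2 := by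
  set φ : ℝ → ℝ := fun θ => ‖h (circleMap 0 r θ)‖ ^ 2 with hφ
  have hφc : Continuous φ := (hh.continuousOn.comp_continuous (continuous_circleMap 0 r)
    fun θ => by simpa [abs_of_nonneg hr] using hrR).norm.pow 2
  have hper : Function.Periodic φ (2 * π) := (periodic_circleMap 0 r).comp (‖h ·‖ ^ 2)
  have hcomplex : ((∫ x in (-r)..r, ‖h x‖ ^ 2 : ℝ) : ℂ) =
      ∫ x in (-r)..r, h x * conj (h (conj (x : ℂ))) := by
    simp only [← intervalIntegral.integral_ofReal, conj_ofReal, mul_conj', ofReal_pow]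
  have hnonneg : 0 ≤ ∫ x in (-r)..r, ‖h x‖ ^ 2 :=
    intervalIntegral.integral_nonneg (by linarith) fun _ _ => by positivity
  calc ∫ x in (-r)..r, ‖h x‖ ^ 2
      = ‖∫ x in (-r)..r, h x * conj (h (conj (x : ℂ)))‖ := by
        rw [← hcomplex, norm_real, norm_of_nonneg hnonneg]
    _ = ‖∫ θ in 0..π, deriv (circleMap 0 r) θ •
          (h (circleMap 0 r θ) * conj (h (conj (circleMap 0 r θ))))‖ := by
        rw [integral_diameter_eq_neg_integral_semicircle hr hrR
          (differentiableOn_mul_conj_comp_conj hh), norm_neg]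
    _ ≤ ∫ θ in 0..π, r / 2 * (φ θ + φ (-θ)) := by
        refine intervalIntegral.norm_integral_le_of_norm_le pi_pos.le (.of_forall fun θ _ => ?_)
          (Continuous.intervalIntegrable (by fun_prop) _ _)
        simp only [hφ, conj_circleMap_zero, deriv_circleMap, smul_eq_mul, norm_mul, norm_I,
          norm_circleMap_zero, abs_of_nonneg hr, RCLike.norm_conj, mul_one]
        nlinarith [two_mul_le_add_sq ‖h (circleMap 0 r θ)‖ ‖h (circleMap 0 r (-θ))‖]
    _ = r / 2 * ∫ θ in 0..2 * π, φ θ := by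
        rw [intervalIntegral.integral_const_mul, intervalIntegral_add_comp_neg_of_periodic hper
          fun _ _ => hφc.intervalIntegrable _ _]

end Quadratic

section HolomorphicPower

lemma exists_differentiableOn_exp_eq {c : ℂ} {R : ℝ} {g : ℂ → ℂ}
    (hg : DifferentiableOn ℂ g (ball c R)) (hg0 : ∀ z ∈ ball c R, g z ≠ 0) :
    ∃ L : ℂ → ℂ, DifferentiableOn ℂ L (ball c R) ∧ ∀ z ∈ ball c R, exp (L z) = g z := by
  rcases le_or_gt R 0 with hR | hR
  · exact ⟨0, differentiableOn_const 0, by simp [ball_eq_empty.2 hR]⟩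
  have hc : c ∈ ball c R := mem_ball_self hR
  obtain ⟨L, hLc, hL⟩ :=
    ((hg.deriv isOpen_ball).div hg hg0).isExactOn_ball.with_val_at c (log (g c))
  refine ⟨L, fun z hz => (hL z hz).differentiableAt.differentiableWithinAt, ?_⟩
  have hderiv : ∀ z ∈ ball c R, HasDerivAt (fun z => exp (L z) / g z) 0 z := fun z hz => by
    have hcancel : exp (L z) * (deriv g / g) z * g z - exp (L z) * deriv g z = 0 := by
      rw [Pi.div_apply, mul_assoc, div_mul_cancel₀ _ (hg0 z hz), sub_self]
    simpa only [hcancel, zero_div] using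
      (hL z hz).cexp.fun_div (hg.hasDerivAt (isOpen_ball.mem_nhds hz)) (hg0 z hz)
  intro z hz
  have hconst : exp (L z) / g z = exp (L c) / g c := isOpen_ball.is_const_of_deriv_eq_zero
    (convex_ball c R).isPreconnected
    (fun w hw => (hderiv w hw).differentiableAt.differentiableWithinAt)
    (fun w hw => (hderiv w hw).deriv) hz hc
  rwa [hLc, exp_log (hg0 c hc), div_self (hg0 c hc), div_eq_one_iff_eq (hg0 z hz)] at hconst

lemma exists_differentiableOn_norm_eq_rpow {c : ℂ} {R : ℝ} {g : ℂ → ℂ}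
    (hg : DifferentiableOn ℂ g (ball c R)) (hg0 : ∀ z ∈ ball c R, g z ≠ 0) (s : ℝ) :
    ∃ h : ℂ → ℂ, DifferentiableOn ℂ h (ball c R) ∧ ∀ z ∈ ball c R, ‖h z‖ = ‖g z‖ ^ s := by
  obtain ⟨L, hL, hexp⟩ := exists_differentiableOn_exp_eq hg hg0
  refine ⟨fun z => exp (s * L z), (hL.const_mul _).cexp, fun z hz => ?_⟩
  rw [← hexp z hz, norm_exp, norm_exp, ← Real.exp_mul, re_ofReal_mul, mul_comm]

end HolomorphicPower

section LimitTheorems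

lemma exists_seq_tendsto_nhdsLT {a b : ℝ} (hab : a < b) :
    ∃ r : ℕ → ℝ, (∀ n, r n ∈ Ioo a b) ∧ Tendsto r atTop (𝓝[<] b) := by
  obtain ⟨r, -, hr, hlim⟩ := exists_seq_strictMono_tendsto' hab
  exact ⟨r, hr, tendsto_nhdsWithin_iff.2 ⟨hlim, .of_forall fun n => (hr n).2⟩⟩

variable {α E : Type*} [MeasurableSpace α] {μ : Measure α} [NormedAddCommGroup E]

lemma integrable_and_integral_norm_le_of_tendsto_ae {ι : Type*} {l : Filter ι} [NeBot l]
    [IsCountablyGenerated l] {g : ι → α → E} {G : α → E} {c : ι → ℝ} {I : ℝ}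
    (hg : ∀ i, Integrable (g i) μ) (hlim : ∀ᵐ a ∂μ, Tendsto (g · a) l (𝓝 (G a)))
    (hle : ∀ i, ∫ a, ‖g i a‖ ∂μ ≤ c i) (hc : Tendsto c l (𝓝 I)) :
    Integrable G μ ∧ ∫ a, ‖G a‖ ∂μ ≤ I := by
  have hnorm : ∀ J > I, eLpNorm G 1 μ ≤ ENNReal.ofReal J := fun J hJ => by
    refine Lp.eLpNorm_le_of_ae_tendsto ?_ (fun i => (hg i).aestronglyMeasurable) hlim
    filter_upwards [hc.eventually_le_const hJ] with i hi
    rw [eLpNorm_one_eq_lintegral_enorm, ← ofReal_integral_norm_eq_lintegral_enorm (hg i)]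
    exact ENNReal.ofReal_le_ofReal ((hle i).trans hi)
  have hG : Integrable G μ := memLp_one_iff_integrable.1
    ⟨aestronglyMeasurable_of_tendsto_ae l (fun i => (hg i).aestronglyMeasurable) hlim,
      (hnorm (I + 1) (lt_add_one I)).trans_lt ENNReal.ofReal_lt_top⟩
  have hI : 0 ≤ I := ge_of_tendsto hc
    (.of_forall fun i => (integral_nonneg fun _ => norm_nonneg _).trans (hle i))
  refine ⟨hG, le_of_forall_gt_imp_ge_of_dense fun J hJ => ?_⟩
  rw [← ENNReal.ofReal_le_ofReal_iff (hI.trans hJ.le), ofReal_integral_norm_eq_lintegral_enorm hG,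
    ← eLpNorm_one_eq_lintegral_enorm]
  exact hnorm J hJ

lemma intervalIntegrable_and_integral_le_of_tendsto {ι : Type*} {l : Filter ι} [NeBot l]
    [IsCountablyGenerated l] {g : ι → ℝ → ℝ} {G : ℝ → ℝ} {a b c : ι → ℝ} {A B I : ℝ}
    (hAB : A ≤ B) (hab : ∀ i, a i ≤ b i) (ha : Tendsto a l (𝓝 A)) (hb : Tendsto b l (𝓝 B))
    (hg : ∀ i, IntervalIntegrable (g i) volume (a i) (b i)) (hg0 : ∀ i x, 0 ≤ g i x)
    (hlim : ∀ x ∈ Ioo A B, Tendsto (g · x) l (𝓝 (G x)))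
    (hle : ∀ i, ∫ x in a i..b i, g i x ≤ c i) (hc : Tendsto c l (𝓝 I)) :
    IntervalIntegrable G volume A B ∧ ∫ x in A..B, G x ≤ I := by
  have hind : ∀ i, Integrable ((Ioc (a i) (b i)).indicator (g i)) (volume.restrict (Ioo A B)) :=
    fun i => ((hg i).1.integrable_indicator measurableSet_Ioc).restrict
  have hindlim : ∀ᵐ x ∂volume.restrict (Ioo A B),
      Tendsto (fun i => (Ioc (a i) (b i)).indicator (g i) x) l (𝓝 (G x)) := by
    filter_upwards [ae_restrict_mem measurableSet_Ioo] with x hx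
    refine (hlim x hx).congr' ?_
    filter_upwards [ha.eventually_lt_const hx.1, hb.eventually_const_lt hx.2] with i hai hbi
    exact (indicator_of_mem (show x ∈ Ioc (a i) (b i) from ⟨hai, hbi.le⟩) (g i)).symm
  have hindle : ∀ i, ∫ x in Ioo A B, ‖(Ioc (a i) (b i)).indicator (g i) x‖ ≤ c i := fun i => by
    refine le_trans ?_ (hle i)
    rw [intervalIntegral.integral_of_le (hab i), ← integral_indicator measurableSet_Ioc]
    simp only [norm_of_nonneg (indicator_nonneg (fun x _ => hg0 i x) _)]
    exact setIntegral_le_integral ((hg i).1.integrable_indicator measurableSet_Ioc)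
      (.of_forall (indicator_nonneg fun x _ => hg0 i x))
  obtain ⟨hG, hGle⟩ := integrable_and_integral_norm_le_of_tendsto_ae hind hindlim hindle hc
  refine ⟨(intervalIntegrable_iff_integrableOn_Ioo_of_le hAB).2 hG, ?_⟩
  rw [intervalIntegral.integral_of_le hAB, integral_Ioc_eq_integral_Ioo]
  exact (integral_mono hG hG.norm fun x => le_norm_self (G x)).trans hGle

lemma unifIntegrable_of_eLpNorm_le {ι : Type*} {u : ι → α → E} {p q C : ENNReal}
    (hqp : q < p) (hu : ∀ i, AEStronglyMeasurable (u i) μ) (hC : C ≠ ⊤)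
    (hle : ∀ i, eLpNorm (u i) p μ ≤ C) : UnifIntegrable u q μ := by
  intro ε hε
  rcases eq_or_ne q 0 with rfl | hq
  · exact ⟨1, one_pos, by simp⟩
  set s : ℝ := 1 / q.toReal - 1 / p.toReal
  have hs : 0 < s := by
    rw [sub_pos, one_div, one_div, ← ENNReal.toReal_inv, ← ENNReal.toReal_inv]
    exact ENNReal.toReal_strict_mono (ENNReal.inv_ne_top.2 hq) (ENNReal.inv_lt_inv.2 hqp)
  have hδ : Tendsto (fun δ : ℝ => C * ENNReal.ofReal δ ^ s) (𝓝[>] 0) (𝓝 0) := by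
    have hpow : Tendsto (fun δ : ℝ => ENNReal.ofReal δ ^ s) (𝓝 0) (𝓝 0) := by
      simpa [hs] using (ENNReal.continuous_ofReal.tendsto 0).ennrpow_const s
    simpa using ENNReal.Tendsto.const_mul (hpow.mono_left nhdsWithin_le_nhds) (.inr hC)
  obtain ⟨δ, hδε, hδ0⟩ := ((hδ.eventually_le_const (ENNReal.ofReal_pos.2 hε)).and
    self_mem_nhdsWithin).exists
  refine ⟨δ, hδ0, fun i t ht htδ => ?_⟩
  calc eLpNorm (t.indicator (u i)) q μ = eLpNorm (u i) q (μ.restrict t) :=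
        eLpNorm_indicator_eq_eLpNorm_restrict ht
    _ ≤ eLpNorm (u i) p (μ.restrict t) * μ.restrict t univ ^ s :=
        eLpNorm_le_eLpNorm_mul_rpow_measure_univ hqp.le (hu i).restrict
    _ ≤ C * ENNReal.ofReal δ ^ s := by
        rw [Measure.restrict_apply_univ]
        gcongr
        exact (eLpNorm_restrict_le _ _ _ _).trans (hle i)
    _ ≤ ENNReal.ofReal ε := hδε

lemma tendsto_integral_norm_rpow_of_eLpNorm_le [IsFiniteMeasure μ] {u : ℕ → α → E} {v : α → E}
    {p q : ℝ} {C : ENNReal} (hq : 0 < q) (hqp : q < p) (hu : ∀ n, AEStronglyMeasurable (u n) μ)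
    (hC : C ≠ ⊤) (hle : ∀ n, eLpNorm (u n) (ENNReal.ofReal p) μ ≤ C)
    (hlim : ∀ᵐ a ∂μ, Tendsto (u · a) atTop (𝓝 (v a))) :
    Tendsto (fun n => ∫ a, ‖u n a‖ ^ q ∂μ) atTop (𝓝 (∫ a, ‖v a‖ ^ q ∂μ)) := by
  have hint : ∀ w : α → E, AEStronglyMeasurable w μ → eLpNorm w (ENNReal.ofReal p) μ ≤ C →
      Integrable (‖w ·‖ ^ q) μ := fun w hw hwC => by
    simpa [hq.le] using (MemLp.mono_exponent ⟨hw, hwC.trans_lt hC.lt_top⟩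
      (ENNReal.ofReal_le_ofReal hqp.le)).integrable_norm_rpow'
  have huint : ∀ n, Integrable (‖u n ·‖ ^ q) μ := fun n => hint _ (hu n) (hle n)
  have hvint : Integrable (‖v ·‖ ^ q) μ := hint _ (aestronglyMeasurable_of_tendsto_ae atTop hu hlim)
    (Lp.eLpNorm_le_of_ae_tendsto (.of_forall hle) hu hlim)
  have hrpow : ∀ n, eLpNorm (‖u n ·‖ ^ q) (ENNReal.ofReal (p / q)) μ ≤ C ^ q := fun n => by
    rw [eLpNorm_norm_rpow _ hq, ← ENNReal.ofReal_mul (by bound), div_mul_cancel₀ p hq.ne']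
    gcongr
    exact hle n
  have hunif : UnifIntegrable (fun n a => ‖u n a‖ ^ q) 1 μ :=
    unifIntegrable_of_eLpNorm_le (by simpa [one_lt_div hq] using hqp)
      (fun n => (huint n).aestronglyMeasurable) (ENNReal.rpow_ne_top_of_nonneg hq.le hC) hrpow
  have hpow : ∀ᵐ a ∂μ, Tendsto (‖u · a‖ ^ q) atTop (𝓝 (‖v a‖ ^ q)) :=
    hlim.mono fun a ha => ha.norm.rpow_const (.inr hq.le)
  exact tendsto_integral_of_L1' _ hvint.aestronglyMeasurable (.of_forall huint)
    (tendsto_Lp_finite_of_tendsto_ae le_rfl ENNReal.one_ne_top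
      (fun n => (huint n).aestronglyMeasurable) (memLp_one_iff_integrable.2 hvint) hunif hpow)

lemma tendsto_integral_norm_rpow_nhdsLT [IsFiniteMeasure μ] {g : α → E} {p : ℝ} (hp : 0 < p)
    (hg : MemLp g (ENNReal.ofReal p) μ) :
    Tendsto (fun q => ∫ a, ‖g a‖ ^ q ∂μ) (𝓝[<] p) (𝓝 (∫ a, ‖g a‖ ^ p ∂μ)) := by
  have hint : Integrable (fun a => ‖g a‖ ^ p) μ := by
    simpa [hp.le] using hg.integrable_norm_rpow'
  have hnear : ∀ᶠ q in 𝓝[<] p, 0 < q ∧ q < p :=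
    (eventually_nhdsWithin_of_eventually_nhds (lt_mem_nhds hp)).and self_mem_nhdsWithin
  refine tendsto_integral_filter_of_dominated_convergence (fun a => 1 + ‖g a‖ ^ p)
    (.of_forall fun q => (hg.1.norm.aemeasurable.pow_const q).aestronglyMeasurable) ?_
    ((integrable_const 1).add hint) (.of_forall fun a => ?_)
  · filter_upwards [hnear] with q hq
    refine .of_forall fun a => ?_
    rw [norm_of_nonneg (by positivity)]
    rcases le_total ‖g a‖ 1 with h | h
    · exact (rpow_le_one (norm_nonneg _) h hq.1.le).trans (by simpa using by positivity)
    · exact (rpow_le_rpow_of_exponent_le h hq.2.le).trans (by simp)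
  · exact tendsto_const_nhds.rpow (tendsto_id.mono_left nhdsWithin_le_nhds) (.inr hp)

end LimitTheorems

section ZeroFreeMajorant

variable {R : ℝ} {w z : ℂ}

lemma norm_sq_sub_conj_mul_sq_sub_norm_sub_sq (R : ℝ) (w z : ℂ) :
    ‖R ^ 2 - conj w * z‖ ^ 2 - ‖R * (z - w)‖ ^ 2 =
      (R ^ 2 - ‖z‖ ^ 2) * (R ^ 2 - ‖w‖ ^ 2) := by
  simp only [← normSq_eq_norm_sq, normSq_apply]
  simp [pow_two]
  ring

lemma one_le_norm_canonicalFactor (hw : w ∈ ball 0 R) (hz : z ∈ closedBall 0 R) (hzw : z ≠ w) :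
    1 ≤ ‖canonicalFactor R w z‖ := by
  rw [mem_ball_zero_iff] at hw
  rw [mem_closedBall_zero_iff] at hz
  have hR : 0 < R := (norm_nonneg w).trans_lt hw
  have hden : 0 < ‖R * (z - w)‖ :=
    norm_pos_iff.2 (mul_ne_zero (ofReal_ne_zero.2 hR.ne') (sub_ne_zero.2 hzw))
  have hprod : 0 ≤ (R ^ 2 - ‖z‖ ^ 2) * (R ^ 2 - ‖w‖ ^ 2) :=
    mul_nonneg (sub_nonneg.2 (by gcongr)) (sub_nonneg.2 (by gcongr))
  rw [canonicalFactor_apply, norm_div, one_le_div hden, ← sq_le_sq₀ hden.le (norm_nonneg _),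
    ← sub_nonneg, norm_sq_sub_conj_mul_sq_sub_norm_sub_sq]
  exact hprod

variable {D : Function.locallyFinsuppWithin (ball (0 : ℂ) R) ℤ}

lemma norm_finprod_canonicalFactor_zpow_neg_le_one (hD : 0 ≤ D) (hz : z ∈ closedBall 0 R) :
    ‖(∏ᶠ u, canonicalFactor R u ^ (-D u)) z‖ ≤ 1 := by
  refine finprod_induction (fun P : ℂ → ℂ => ‖P z‖ ≤ 1) (by simp) (fun P Q hP hQ => ?_) fun u => ?_
  · simpa using mul_le_one₀ hP (norm_nonneg _) hQ
  obtain ⟨n, hn⟩ := Int.eq_ofNat_of_zero_le (hD u)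
  simp only [hn, Pi.pow_apply, zpow_neg, zpow_natCast, norm_inv, norm_pow]
  by_cases hu : u ∈ ball 0 R
  · rcases eq_or_ne z u with rfl | hzu
    · rw [canonicalFactor_apply_self, norm_zero, ← inv_pow, inv_zero]
      exact pow_le_one₀ le_rfl zero_le_one
    · exact inv_le_one_of_one_le₀ (one_le_pow₀ (one_le_norm_canonicalFactor hu hz hzu))
  · have hn0 : n = 0 := by simpa [D.apply_eq_zero_of_notMem hu] using hn.symm
    simp [hn0]

lemma continuousAt_finprod_canonicalFactor_zpow_and_norm_eq_one (hz : z ∈ sphere 0 R) :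
    ContinuousAt (∏ᶠ u, canonicalFactor R u ^ (-D u)) z ∧
      ‖(∏ᶠ u, canonicalFactor R u ^ (-D u)) z‖ = 1 := by
  refine finprod_induction (fun P : ℂ → ℂ => ContinuousAt P z ∧ ‖P z‖ = 1)
    ⟨continuousAt_const, by simp⟩ (fun P Q hP hQ => ⟨hP.1.mul hQ.1, by simp [hP.2, hQ.2]⟩)
    fun u => ?_
  by_cases hu : u ∈ ball 0 R
  · have hzu : z ≠ u := fun h => sphere_disjoint_ball.le_bot ⟨hz, h ▸ hu⟩
    have hne := canonicalFactor_ne_zero hu (sphere_subset_closedBall hz) hzu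
    exact ⟨(analyticOnNhd_canonicalFactor R u z hzu).continuousAt.zpow₀ _ (.inl hne),
      by simp [norm_canonicalFactor_eval_circle_eq_one hu hz]⟩
  · simp [D.apply_eq_zero_of_notMem hu, continuous_one.continuousAt]

lemma neBot_nhdsWithin_inter_of_mem_codiscreteWithin {X : Type*} [TopologicalSpace X] {S T : Set X}
    {x : X} (hT : Preperfect T) (hS : S ∈ codiscreteWithin T) (hx : x ∈ T) :
    (𝓝[T ∩ S] x).NeBot := by
  have hacc : (𝓝[≠] x ⊓ 𝓟 T).NeBot := hT x hx
  refine hacc.mono (le_inf (inf_le_left.trans nhdsWithin_le_nhds) (le_principal_iff.2 ?_))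
  filter_upwards [mem_inf_of_left (mem_codiscreteWithin_iff_forall_mem_nhdsNE.1 hS x hx),
    mem_inf_of_right (mem_principal_self T)] with y hy hyT
  exact ⟨hyT, hy.resolve_right (not_not_intro hyT)⟩

variable {E : Type*} [NormedAddCommGroup E] [NormedSpace ℂ E] {f : ℂ → E}

lemma exists_canonicalDecomp_analyticOnNhd (hR : 0 < R)
    (hf : AnalyticOnNhd ℂ f (closedBall 0 R)) (hf0 : ∃ z ∈ closedBall 0 R, f z ≠ 0) :
    ∃ g : ℂ → E, CanonicalDecomp f g R ∧ AnalyticOnNhd ℂ g (closedBall 0 R) := by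
  have hconn : IsConnected (closedBall (0 : ℂ) R) :=
    (convex_closedBall 0 R).isConnected (nonempty_closedBall.2 hR.le)
  obtain ⟨z₀, hz₀, hfz₀⟩ := hf0
  have horder₀ : meromorphicOrderAt f z₀ ≠ ⊤ := by
    simp [(hf z₀ hz₀).meromorphicOrderAt_eq, (hf z₀ hz₀).analyticOrderAt_eq_zero.2 hfz₀]
  obtain ⟨g, hfg⟩ := hf.meromorphicOn.exists_canonicalDecomp
    ((hf.meromorphicOn.exists_meromorphicOrderAt_ne_top_iff_forall hconn).1 ⟨⟨z₀, hz₀⟩, horder₀⟩)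
  refine ⟨g, hfg, hfg.meromorphicNFOn.divisor_nonneg_iff_analyticOnNhd.1 fun z => ?_⟩
  rw [hfg.divisor_eq_divisor hR]
  exact MeromorphicOn.AnalyticOnNhd.divisor_nonneg (hf.mono sphere_subset_closedBall) z

lemma exists_zeroFree_majorant (hR : 0 < R) (hf : AnalyticOnNhd ℂ f (closedBall 0 R))
    (hf0 : ∃ z ∈ closedBall 0 R, f z ≠ 0) :
    ∃ g : ℂ → E, AnalyticOnNhd ℂ g (closedBall 0 R) ∧ (∀ z ∈ ball 0 R, g z ≠ 0) ∧
      (∀ z ∈ closedBall 0 R, ‖f z‖ ≤ ‖g z‖) ∧ ∀ z ∈ sphere 0 R, ‖f z‖ = ‖g z‖ := by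
  obtain ⟨g, hfg, hg⟩ := exists_canonicalDecomp_analyticOnNhd hR hf hf0
  set D := MeromorphicOn.divisor f (ball 0 R)
  set P : ℂ → ℂ := ∏ᶠ u, canonicalFactor R u ^ (-D u)
  -- `f = P • g` only holds off a discrete set, so values of `f` and `g` are compared as limits.
  have hperf : Preperfect (closedBall (0 : ℂ) R) :=
    closure_ball (0 : ℂ) hR.ne' ▸ isOpen_ball.preperfect.perfect_closure.acc
  have hne : ∀ z ∈ closedBall 0 R, (𝓝[closedBall 0 R ∩ {w | f w = P w • g w}] z).NeBot :=
    fun z hz => neBot_nhdsWithin_inter_of_mem_codiscreteWithin hperf hfg.eventuallyEq hz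
  have hlim : ∀ {k : ℂ → E}, AnalyticOnNhd ℂ k (closedBall 0 R) → ∀ z ∈ closedBall 0 R,
      Tendsto (‖k ·‖) (𝓝[closedBall 0 R ∩ {w | f w = P w • g w}] z) (𝓝 ‖k z‖) :=
    fun hk z hz => (hk z hz).continuousAt.norm.tendsto.mono_left nhdsWithin_le_nhds
  refine ⟨g, hg, hfg.ne_zero, fun z hz => ?_, fun z hz => ?_⟩
  · have := hne z hz
    refine le_of_tendsto_of_tendsto (hlim hf z hz) (hlim hg z hz) ?_
    filter_upwards [self_mem_nhdsWithin] with w hw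
    rw [hw.2, norm_smul]
    exact mul_le_of_le_one_left (norm_nonneg _) <|
      norm_finprod_canonicalFactor_zpow_neg_le_one (MeromorphicOn.AnalyticOnNhd.divisor_nonneg
        (hf.mono ball_subset_closedBall)) hw.1
  · have hz' := sphere_subset_closedBall hz
    have := hne z hz'
    obtain ⟨hPc, hP1⟩ := continuousAt_finprod_canonicalFactor_zpow_and_norm_eq_one (D := D) hz
    have hPg := (hPc.norm.tendsto.mono_left nhdsWithin_le_nhds).mul (hlim hg z hz')
    rw [hP1, one_mul] at hPg
    refine tendsto_nhds_unique (hlim hf z hz') (hPg.congr' ?_)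
    filter_upwards [self_mem_nhdsWithin] with w hw
    rw [hw.2, norm_smul]

end ZeroFreeMajorant

section ClosedDisk

lemma tendsto_integral_circleMap_of_continuousOn {E : Type*} [NormedAddCommGroup E]
    [NormedSpace ℝ E] {c : ℂ} {R : ℝ} {φ : ℂ → E} (hφ : ContinuousOn φ (closedBall c R))
    {r : ℕ → ℝ} (hr0 : ∀ n, 0 ≤ r n) (hrR : ∀ n, r n ≤ R) (hr : Tendsto r atTop (𝓝 R)) (a b : ℝ) :
    Tendsto (fun n => ∫ θ in a..b, φ (circleMap c (r n) θ)) atTop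
      (𝓝 (∫ θ in a..b, φ (circleMap c R θ))) := by
  obtain ⟨M, hM⟩ := (isCompact_closedBall c R).exists_bound_of_continuousOn hφ
  have hmem : ∀ n θ, circleMap c (r n) θ ∈ closedBall c R := fun n θ =>
    closedBall_subset_closedBall (hrR n) (circleMap_mem_closedBall c (hr0 n) θ)
  refine intervalIntegral.tendsto_integral_filter_of_dominated_convergence (fun _ => M)
    (.of_forall fun n => ?_) (.of_forall fun n => .of_forall fun θ _ => hM _ (hmem n θ))
    intervalIntegrable_const (.of_forall fun θ _ => ?_)
  · exact (hφ.comp_continuous (continuous_circleMap c (r n)) (hmem n)).aestronglyMeasurable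
  · have hRmem : circleMap c R θ ∈ closedBall c R :=
      circleMap_mem_closedBall c ((hr0 0).trans (hrR 0)) θ
    have hlim : Tendsto (fun n => circleMap c (r n) θ) atTop (𝓝 (circleMap c R θ)) := by
      have : Continuous fun s : ℝ => circleMap c s θ := by unfold circleMap; fun_prop
      exact (this.tendsto R).comp hr
    exact (hφ _ hRmem).tendsto.comp (tendsto_nhdsWithin_iff.2 ⟨hlim, .of_forall fun n => hmem n θ⟩)

lemma intervalIntegrable_norm_rpow_diameter {E : Type*} [NormedAddCommGroup E] {f : ℂ → E}
    {r q : ℝ} (hr : 0 ≤ r) (hq : 0 ≤ q) (hf : ContinuousOn f (closedBall 0 r)) :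
    IntervalIntegrable (fun x : ℝ => ‖f x‖ ^ q) volume (-r) r := by
  refine ContinuousOn.intervalIntegrable
    ((hf.norm.rpow_const fun _ _ => .inr hq).comp (by fun_prop) fun x hx => ?_)
  rw [uIcc_of_le (by linarith)] at hx
  simpa using abs_le.2 hx

lemma integral_norm_rpow_diameter_le_of_ne_zero {g : ℂ → ℂ} {r q : ℝ} (hr : 0 < r) (hq : 0 < q)
    (hg : DiffContOnCl ℂ g (ball 0 r)) (hg0 : ∀ z ∈ ball 0 r, g z ≠ 0) :
    ∫ x in (-r)..r, ‖g x‖ ^ q ≤ r / 2 * ∫ θ in 0..2 * π, ‖g (circleMap 0 r θ)‖ ^ q := by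
  obtain ⟨h, hh, hnorm⟩ := exists_differentiableOn_norm_eq_rpow hg.differentiableOn hg0 (q / 2)
  have hsq : ∀ z ∈ ball 0 r, ‖h z‖ ^ 2 = ‖g z‖ ^ q := fun z hz => by
    rw [hnorm z hz, ← rpow_mul_natCast (norm_nonneg _)]
    norm_num
  obtain ⟨s, -, hs, hslim⟩ := exists_seq_strictMono_tendsto' hr
  have hcont : ContinuousOn (fun z => ‖g z‖ ^ q) (closedBall 0 r) :=
    hg.continuousOn_ball.norm.rpow_const fun _ _ => .inr hq.le
  have hle : ∀ n, ∫ x in (-s n)..s n, ‖g x‖ ^ q ≤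
      s n / 2 * ∫ θ in 0..2 * π, ‖g (circleMap 0 (s n) θ)‖ ^ q := fun n => by
    have hcirc : ∀ θ, circleMap 0 (s n) θ ∈ ball 0 r := fun θ => by
      simpa [abs_of_pos (hs n).1] using (hs n).2
    have hseg : ∀ x ∈ uIcc (-s n) (s n), (x : ℂ) ∈ ball 0 r := fun x hx => by
      rw [uIcc_of_le (by linarith [(hs n).1])] at hx
      simpa using (abs_le.2 hx).trans_lt (hs n).2
    rw [← intervalIntegral.integral_congr fun x hx => hsq x (hseg x hx)]
    simpa only [hsq _ (hcirc _)] using integral_norm_sq_diameter_le (hs n).1.le (hs n).2 hh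
  exact (intervalIntegrable_and_integral_le_of_tendsto (by linarith)
    (fun n => by linarith [(hs n).1]) hslim.neg hslim
    (fun n => intervalIntegrable_norm_rpow_diameter (hs n).1.le hq.le
      (hg.continuousOn_ball.mono (closedBall_subset_closedBall (hs n).2.le)))
    (fun _ _ => rpow_nonneg (norm_nonneg _) q) (fun _ _ => tendsto_const_nhds) hle
    ((hslim.div_const 2).mul (tendsto_integral_circleMap_of_continuousOn hcont
      (fun n => (hs n).1.le) (fun n => (hs n).2.le) hslim 0 (2 * π)))).2

theorem integral_norm_rpow_diameter_le {f : ℂ → ℂ} {r q : ℝ} (hr : 0 < r) (hq : 0 < q)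
    (hf : AnalyticOnNhd ℂ f (closedBall 0 r)) :
    ∫ x in (-r)..r, ‖f x‖ ^ q ≤ r / 2 * ∫ θ in 0..2 * π, ‖f (circleMap 0 r θ)‖ ^ q := by
  have hseg : ∀ x ∈ Icc (-r) r, (x : ℂ) ∈ closedBall 0 r := fun x hx => by
    simpa using abs_le.2 hx
  by_cases hf0 : ∃ z ∈ closedBall 0 r, f z ≠ 0
  · obtain ⟨g, hg, hg0, hfg, hcirc⟩ := exists_zeroFree_majorant hr hf hf0
    have hgcl : DiffContOnCl ℂ g (ball 0 r) :=
      (hg.differentiableOn.mono closure_ball_subset_closedBall).diffContOnCl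
    calc ∫ x in (-r)..r, ‖f x‖ ^ q
        ≤ ∫ x in (-r)..r, ‖g x‖ ^ q := intervalIntegral.integral_mono_on (by linarith)
          (intervalIntegrable_norm_rpow_diameter hr.le hq.le hf.continuousOn)
          (intervalIntegrable_norm_rpow_diameter hr.le hq.le hg.continuousOn)
          fun x hx => by gcongr; exact hfg x (hseg x hx)
      _ ≤ r / 2 * ∫ θ in 0..2 * π, ‖g (circleMap 0 r θ)‖ ^ q :=
          integral_norm_rpow_diameter_le_of_ne_zero hr hq hgcl hg0
      _ = r / 2 * ∫ θ in 0..2 * π, ‖f (circleMap 0 r θ)‖ ^ q := by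
          simp only [hcirc _ (circleMap_mem_sphere 0 hr.le _)]
  · push Not at hf0
    have hzero : ∫ x in (-r)..r, ‖f x‖ ^ q = ∫ _ in (-r)..r, (0 : ℝ) :=
      intervalIntegral.integral_congr fun x hx => by
        rw [uIcc_of_le (by linarith)] at hx
        simp [hf0 x (hseg x hx), hq.ne']
    rw [hzero, intervalIntegral.integral_zero]
    exact mul_nonneg (by positivity)
      (intervalIntegral.integral_nonneg (by positivity) fun _ _ => by positivity)

end ClosedDisk

section BoundaryValues

variable {E : Type*} [NormedAddCommGroup E] {f : ℂ → E} {F : ℝ → E} {p R : ℝ} {K P : ENNReal}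

lemma continuous_comp_circleMap_zero {r : ℝ} (hf : ContinuousOn f (ball 0 R)) (hr : r ∈ Ico 0 R) :
    Continuous fun θ => f (circleMap 0 r θ) :=
  hf.comp_continuous (continuous_circleMap 0 r) fun θ => by simpa [abs_of_nonneg hr.1] using hr.2

lemma eLpNorm_comp_circleMap_le {r C : ℝ} (hp : 0 < p) (hf : ContinuousOn f (ball 0 R))
    (hr : r ∈ Ico 0 R) (hC : ∫ θ in 0..2 * π, ‖f (circleMap 0 r θ)‖ ^ p ≤ C) :
    eLpNorm (fun θ => f (circleMap 0 r θ)) (ENNReal.ofReal p) (volume.restrict (Ioc 0 (2 * π))) ≤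
      ENNReal.ofReal (C ^ p⁻¹) := by
  have hcont := continuous_comp_circleMap_zero hf hr
  have hP : ENNReal.ofReal p ≠ 0 := by simpa using hp
  have hint : IntegrableOn (fun θ => ‖f (circleMap 0 r θ)‖ ^ p) (Ioc 0 (2 * π)) :=
    (hcont.norm.rpow_const fun _ => .inr hp.le).integrableOn_Ioc
  have hmem : MemLp (fun θ => f (circleMap 0 r θ)) (ENNReal.ofReal p)
      (volume.restrict (Ioc 0 (2 * π))) := by
    refine (integrable_norm_rpow_iff hcont.aestronglyMeasurable hP ENNReal.ofReal_ne_top).1 ?_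
    rwa [ENNReal.toReal_ofReal hp.le]
  rw [intervalIntegral.integral_of_le two_pi_pos.le] at hC
  rw [hmem.eLpNorm_eq_integral_rpow_norm hP ENNReal.ofReal_ne_top, ENNReal.toReal_ofReal hp.le]
  gcongr

lemma memLp_radialLimit (hR : 0 < R) (hf : ContinuousOn f (ball 0 R)) (hK : K ≠ ⊤)
    (hle : ∀ r ∈ Ico 0 R,
      eLpNorm (fun θ => f (circleMap 0 r θ)) P (volume.restrict (Ioc 0 (2 * π))) ≤ K)
    (hF : ∀ᵐ θ, Tendsto (fun r => f (circleMap 0 r θ)) (𝓝[<] R) (𝓝 (F θ))) :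
    MemLp F P (volume.restrict (Ioc 0 (2 * π))) := by
  obtain ⟨r, hr, hrlim⟩ := exists_seq_tendsto_nhdsLT hR
  have hr' : ∀ n, r n ∈ Ico 0 R := fun n => Ioo_subset_Ico_self (hr n)
  have hmeas : ∀ n, AEStronglyMeasurable (fun θ => f (circleMap 0 (r n) θ))
      (volume.restrict (Ioc 0 (2 * π))) := fun n =>
    (continuous_comp_circleMap_zero hf (hr' n)).aestronglyMeasurable
  have hlim : ∀ᵐ θ ∂volume.restrict (Ioc 0 (2 * π)),
      Tendsto (fun n => f (circleMap 0 (r n) θ)) atTop (𝓝 (F θ)) :=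
    ae_restrict_of_ae (hF.mono fun θ hθ => hθ.comp hrlim)
  exact ⟨aestronglyMeasurable_of_tendsto_ae atTop hmeas hlim, (Lp.eLpNorm_le_of_ae_tendsto
    (.of_forall fun n => hle _ (hr' n)) hmeas hlim).trans_lt hK.lt_top⟩

theorem integral_norm_rpow_diameter_le_radialLimit_of_lt {f : ℂ → ℂ} {F : ℝ → ℂ} {q : ℝ}
    (hR : 0 < R) (hq : 0 < q) (hqp : q < p) (hf : AnalyticOnNhd ℂ f (ball 0 R)) (hK : K ≠ ⊤)
    (hle : ∀ r ∈ Ico 0 R, eLpNorm (fun θ => f (circleMap 0 r θ)) (ENNReal.ofReal p)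
      (volume.restrict (Ioc 0 (2 * π))) ≤ K)
    (hF : ∀ᵐ θ, Tendsto (fun r => f (circleMap 0 r θ)) (𝓝[<] R) (𝓝 (F θ))) :
    IntervalIntegrable (fun x : ℝ => ‖f x‖ ^ q) volume (-R) R ∧
      ∫ x in (-R)..R, ‖f x‖ ^ q ≤ R / 2 * ∫ θ in 0..2 * π, ‖F θ‖ ^ q := by
  obtain ⟨r, hr, hrlim⟩ := exists_seq_tendsto_nhdsLT hR
  have hr' : ∀ n, r n ∈ Ico 0 R := fun n => Ioo_subset_Ico_self (hr n)
  have hrlim' : Tendsto r atTop (𝓝 R) := hrlim.mono_right nhdsWithin_le_nhds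
  have hcircle : Tendsto (fun n => ∫ θ in 0..2 * π, ‖f (circleMap 0 (r n) θ)‖ ^ q) atTop
      (𝓝 (∫ θ in 0..2 * π, ‖F θ‖ ^ q)) := by
    simp only [intervalIntegral.integral_of_le two_pi_pos.le]
    exact tendsto_integral_norm_rpow_of_eLpNorm_le hq hqp
      (fun n => (continuous_comp_circleMap_zero hf.continuousOn (hr' n)).aestronglyMeasurable) hK
      (fun n => hle _ (hr' n)) (ae_restrict_of_ae (hF.mono fun θ hθ => hθ.comp hrlim))
  have hclosed : ∀ n, AnalyticOnNhd ℂ f (closedBall 0 (r n)) := fun n =>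
    hf.mono (closedBall_subset_ball (hr n).2)
  exact intervalIntegrable_and_integral_le_of_tendsto (by linarith)
    (fun n => by linarith [(hr n).1]) hrlim'.neg hrlim'
    (fun n => intervalIntegrable_norm_rpow_diameter (hr n).1.le hq.le (hclosed n).continuousOn)
    (fun _ _ => rpow_nonneg (norm_nonneg _) q) (fun _ _ => tendsto_const_nhds)
    (fun n => integral_norm_rpow_diameter_le (hr n).1 hq (hclosed n))
    ((hrlim'.div_const 2).mul hcircle)

end BoundaryValues

/-- **Riesz–Fejér inequality.** If `f` is analytic on the unit disk, in the Hardy space `H^p`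
(uniformly bounded integral means), with a.e. radial limit `F` on the circle, then the integral
of `|f(x)|^p` along `[-1, 1]` converges and is at most half of `∫ |F(θ)|^p dθ`. -/
theorem riesz_fejer (p : ℝ) (hp : 0 < p) (f : ℂ → ℂ) (F : ℝ → ℂ)
    (hf : AnalyticOn ℂ f (Metric.ball 0 1))
    (hHp : ∃ C : ℝ, ∀ r : ℝ, 0 ≤ r → r < 1 →
      (∫ θ in (0:ℝ)..(2 * π), ‖f ((r : ℂ) * Complex.exp (θ * Complex.I))‖ ^ p) ≤ C)
    (hF : ∀ᵐ θ : ℝ, Tendsto (fun r : ℝ => f ((r : ℂ) * Complex.exp (θ * Complex.I)))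
      (nhdsWithin 1 (Set.Iio 1)) (nhds (F θ))) :
    IntervalIntegrable (fun x : ℝ => ‖f (x : ℂ)‖ ^ p) volume (-1) 1 ∧
      (∫ x in (-1:ℝ)..1, ‖f (x : ℂ)‖ ^ p) ≤ (1 / 2) * ∫ θ in (0:ℝ)..(2 * π), ‖F θ‖ ^ p := by
  simp only [← circleMap_zero] at hHp hF
  obtain ⟨C, hC⟩ := hHp
  have hfa : AnalyticOnNhd ℂ f (ball 0 1) := isOpen_ball.analyticOn_iff_analyticOnNhd.1 hf
  have hmeans : ∀ r ∈ Ico (0 : ℝ) 1, eLpNorm (fun θ => f (circleMap 0 r θ)) (ENNReal.ofReal p)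
      (volume.restrict (Ioc 0 (2 * π))) ≤ ENNReal.ofReal (C ^ p⁻¹) := fun r hr =>
    eLpNorm_comp_circleMap_le hp hfa.continuousOn hr (hC r hr.1 hr.2)
  have hFp := memLp_radialLimit one_pos hfa.continuousOn ENNReal.ofReal_ne_top hmeans hF
  obtain ⟨q, hq, hqlim⟩ := exists_seq_tendsto_nhdsLT hp
  have hle := fun n => integral_norm_rpow_diameter_le_radialLimit_of_lt one_pos (hq n).1 (hq n).2
    hfa ENNReal.ofReal_ne_top hmeans hF
  have hlim : Tendsto (fun n => ∫ θ in 0..2 * π, ‖F θ‖ ^ q n) atTop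
      (𝓝 (∫ θ in 0..2 * π, ‖F θ‖ ^ p)) := by
    simp only [intervalIntegral.integral_of_le two_pi_pos.le]
    exact (tendsto_integral_norm_rpow_nhdsLT hp hFp).comp hqlim
  exact intervalIntegrable_and_integral_le_of_tendsto (by norm_num) (fun _ => by norm_num)
    tendsto_const_nhds tendsto_const_nhds (fun n => (hle n).1)
    (fun _ _ => rpow_nonneg (norm_nonneg _) _)
    (fun _ _ => tendsto_const_nhds.rpow (hqlim.mono_right nhdsWithin_le_nhds) (.inr hp))
    (fun n => (hle n).2) (hlim.const_mul (1 / 2))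
end

section
/- Let 1 < p ≤ 2 and let f = h + conj(g) be a complex-valued harmonic function on the unit disk (h, g analytic, g(0) = 0) belonging to the harmonic Hardy space h^p. Then for all real t, ∫_{-1}^{1} |f(x e^{it})|^p dx ≤ (1/2) sec^p(π/(2p)) ∫₀^{2π} |f(e^{iθ})|^p dθ, where f(e^{iθ}) denotes the radial limit. -/
open Complex MeasureTheory Real Filter

/-!
Write `|(h, g)| = (|h|² + |g|²)^{1/2}` and let `1 < q < 2`. On a disc of radius less than `1`,
Kalaj's inequality bounds the circle average of `|(h, g)|^q` by that of `|h + conj g|^q`: it holds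
pointwise up to a positive multiple of `Re ((h g)^{q/2})`, a subharmonic function which is
nonnegative at the centre when `g(0) = 0`; replacing `(h, g)` by `(h + conj g(0), g - g(0))`
arranges that. As `|(h, g)|^q` is log-subharmonic, the Fejér–Riesz–Lozinski inequality bounds its
integral over a diameter, and `|h + conj g| ≤ √2 |(h, g)|` concludes. For `q < p` the `q`-th
powers of the dilations of `f` are uniformly integrable, so the inequality passes to the boundary
values; then `q → p`.
-/

open scoped Topology ComplexConjugate
open Metric (ball closedBall sphere)

theorem integral_segment_eq_neg_integral_upper_semicircle {K : ℂ → ℂ} (hK : Differentiable ℂ K) :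
    (∫ x in (-1 : ℝ)..1, K x) = -∫ θ in (0 : ℝ)..π, circleMap 0 1 θ * I * K (circleMap 0 1 θ) := by
  obtain ⟨Q, hQ⟩ := (hK.differentiableOn (s := ball 0 2)).isExactOn_ball
  have segment : (∫ x in (-1 : ℝ)..1, K x) = Q 1 - Q (-1) := by
    have hderiv : ∀ x ∈ Set.uIcc (-1 : ℝ) 1, HasDerivAt (fun x : ℝ => Q x) (K x) x := by
      intro x hx
      rw [Set.uIcc_of_le (by norm_num), Set.mem_Icc, ← abs_le] at hx
      refine HasDerivAt.comp_ofReal (hQ _ ?_)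
      rw [mem_ball_zero_iff, norm_real, Real.norm_eq_abs]
      linarith
    simpa using intervalIntegral.integral_eq_sub_of_hasDerivAt hderiv
      ((hK.continuous.comp continuous_ofReal).intervalIntegrable _ _)
  have semicircle :
      (∫ θ in (0 : ℝ)..π, circleMap 0 1 θ * I * K (circleMap 0 1 θ)) = Q (-1) - Q 1 := by
    have hderiv : ∀ θ ∈ Set.uIcc 0 π, HasDerivAt (fun θ : ℝ => Q (circleMap 0 1 θ))
        (circleMap 0 1 θ * I * K (circleMap 0 1 θ)) θ := fun θ _ =>
      HasDerivAt.scomp θ (hQ _ (by simp)) (hasDerivAt_circleMap 0 1 θ)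
    have hcont : Continuous fun θ : ℝ => circleMap 0 1 θ * I * K (circleMap 0 1 θ) := by
      have := hK.continuous
      fun_prop
    simpa [circleMap] using intervalIntegral.integral_eq_sub_of_hasDerivAt hderiv
      (hcont.intervalIntegrable _ _)
  rw [segment, semicircle, neg_sub]

theorem integral_upper_semicircle_add_neg {u : ℂ → ℝ} (hu : ContinuousOn u (sphere 0 1)) :
    (∫ θ in (0 : ℝ)..π, (u (circleMap 0 1 θ) + u (circleMap 0 1 (-θ)))) =
      2 * π * circleAverage u 0 1 := by
  have hcont : Continuous fun θ : ℝ => u (circleMap 0 1 θ) :=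
    hu.comp_continuous (by fun_prop) fun θ => by simp
  have hcont' : Continuous fun θ : ℝ => u (circleMap 0 1 (-θ)) := hcont.comp continuous_neg
  have hper := (periodic_circleMap 0 1).comp u |>.intervalIntegral_add_eq (-π) 0
  rw [intervalIntegral.integral_add (hcont.intervalIntegrable _ _)
      (hcont'.intervalIntegrable _ _),
    intervalIntegral.integral_comp_neg (fun θ => u (circleMap 0 1 θ)), neg_zero, add_comm,
    intervalIntegral.integral_add_adjacent_intervals (hcont.intervalIntegrable _ _)
      (hcont.intervalIntegrable _ _), circleAverage_def, smul_eq_mul,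
    mul_inv_cancel_left₀ two_pi_pos.ne']
  simpa [two_mul] using hper

-- The contour integral is that of `G(z) * conj (G (conj z))`, which is `‖G‖ ^ 2` on the real axis.
theorem integral_norm_sq_segment_le {G : ℂ → ℂ} (hG : Differentiable ℂ G) :
    (∫ x in (-1 : ℝ)..1, ‖G x‖ ^ 2) ≤ π * circleAverage (fun z => ‖G z‖ ^ 2) 0 1 := by
  have hGc := hG.continuous
  let K : ℂ → ℂ := fun z => G z * conj (G (conj z))
  have hK : Differentiable ℂ K := by
    refine hG.mul fun z => ?_
    simpa [Function.comp_def] using (hG (conj z)).conj_conj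
  have hreal (x : ℝ) : K x = ((‖G x‖ ^ 2 : ℝ) : ℂ) := by
    simp [K, mul_conj, normSq_eq_norm_sq]
  have hconj (θ : ℝ) : conj (circleMap 0 1 θ) = circleMap 0 1 (-θ) := by
    simp [circleMap, ← exp_conj]
  have harc (θ : ℝ) : ‖circleMap 0 1 θ * I * K (circleMap 0 1 θ)‖ ≤
      1 / 2 * (‖G (circleMap 0 1 θ)‖ ^ 2 + ‖G (circleMap 0 1 (-θ))‖ ^ 2) := by
    simp only [K, hconj, norm_mul, norm_circleMap_zero, norm_I, RCLike.norm_conj, abs_one, one_mul]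
    linarith [two_mul_le_add_sq ‖G (circleMap 0 1 θ)‖ ‖G (circleMap 0 1 (-θ))‖]
  have hseg : ((∫ x in (-1 : ℝ)..1, ‖G x‖ ^ 2 : ℝ) : ℂ) =
      -∫ θ in (0 : ℝ)..π, circleMap 0 1 θ * I * K (circleMap 0 1 θ) := by
    rw [← integral_segment_eq_neg_integral_upper_semicircle hK]
    simp only [hreal, intervalIntegral.integral_ofReal]
  calc (∫ x in (-1 : ℝ)..1, ‖G x‖ ^ 2)
      ≤ ‖((∫ x in (-1 : ℝ)..1, ‖G x‖ ^ 2 : ℝ) : ℂ)‖ := by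
        rw [norm_real]; exact le_abs_self _
    _ ≤ ∫ θ in (0 : ℝ)..π,
          1 / 2 * (‖G (circleMap 0 1 θ)‖ ^ 2 + ‖G (circleMap 0 1 (-θ))‖ ^ 2) := by
        rw [hseg, norm_neg]
        exact intervalIntegral.norm_integral_le_of_norm_le pi_pos.le
          (Eventually.of_forall fun θ _ => harc θ)
          (Continuous.intervalIntegrable (by fun_prop) _ _)
    _ = π * circleAverage (fun z => ‖G z‖ ^ 2) 0 1 := by
        rw [intervalIntegral.integral_const_mul,
          integral_upper_semicircle_add_neg (u := fun z => ‖G z‖ ^ 2) (by fun_prop)]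
        ring

theorem exists_differentiable_re_eq_of_mem_span_fourier {T : ℝ} {f : C(AddCircle T, ℂ)}
    (hf : f ∈ Submodule.span ℂ (Set.range (@fourier T))) (c : ℂ) :
    ∃ P : ℂ → ℂ, Differentiable ℂ P ∧ ∀ x, (P (AddCircle.toCircle x)).re = (c * f x).re := by
  induction hf using Submodule.span_induction generalizing c with
  | mem f hf =>
    obtain ⟨n, rfl⟩ := hf
    obtain ⟨m, rfl | rfl⟩ := n.eq_nat_or_neg
    · refine ⟨fun z => c * z ^ m, by fun_prop, fun x => ?_⟩
      simp [fourier_apply, AddCircle.toCircle_nsmul]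
    · -- `c * z⁻ᵐ` and its conjugate `conj c * zᵐ` have the same real part on the circle.
      refine ⟨fun z => conj c * z ^ m, by fun_prop, fun x => ?_⟩
      rw [fourier_neg, ← conj_re]
      simp [fourier_apply, AddCircle.toCircle_nsmul, -mul_re]
  | zero => exact ⟨fun _ => 0, by fun_prop, by simp⟩
  | add f g _ _ hf hg =>
    obtain ⟨P, hP, hPf⟩ := hf c
    obtain ⟨R, hR, hRg⟩ := hg c
    exact ⟨fun z => P z + R z, hP.add hR, fun x => by simp [mul_add, -mul_re, hPf, hRg]⟩
  | smul a f _ hf =>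
    obtain ⟨P, hP, hPf⟩ := hf (c * a)
    exact ⟨P, hP, fun x => by rw [hPf, ContinuousMap.smul_apply, smul_eq_mul, mul_assoc]⟩

theorem exists_differentiable_re_approx {φ : ℂ → ℝ} (hφ : ContinuousOn φ (sphere 0 1))
    {δ : ℝ} (hδ : 0 < δ) :
    ∃ P : ℂ → ℂ, Differentiable ℂ P ∧ ∀ z ∈ sphere (0 : ℂ) 1, |(P z).re - φ z| < δ := by
  have : Fact (0 < 2 * π) := ⟨two_pi_pos⟩
  let e : AddCircle (2 * π) ≃ₜ Circle := AddCircle.homeomorphCircle two_pi_pos.ne'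
  have hφe : Continuous fun x => (φ (e x) : ℂ) :=
    continuous_ofReal.comp <| (hφ.comp_continuous continuous_subtype_val fun x => x.2).comp
      e.continuous
  have hmem : (⟨_, hφe⟩ : C(AddCircle (2 * π), ℂ)) ∈
      (Submodule.span ℂ (Set.range (@fourier (2 * π)))).topologicalClosure := by
    rw [span_fourier_closure_eq_top]
    trivial
  obtain ⟨f, hf, hfφ⟩ := Metric.mem_closure_iff.1 hmem δ hδ
  obtain ⟨P, hP, hPf⟩ := exists_differentiable_re_eq_of_mem_span_fourier hf 1
  refine ⟨P, hP, fun z hz => ?_⟩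
  obtain ⟨x, hx⟩ := e.surjective ⟨z, hz⟩
  obtain rfl : (AddCircle.toCircle x : ℂ) = z := by
    rw [← AddCircle.homeomorphCircle_apply two_pi_pos.ne', hx]
  have hdist := (ContinuousMap.dist_apply_le_dist x).trans_lt hfφ
  rw [dist_comm, dist_eq_norm] at hdist
  calc |(P (AddCircle.toCircle x)).re - φ (AddCircle.toCircle x)| = |(f x - φ (e x)).re| := by
        rw [hPf, one_mul, sub_re, ofReal_re, AddCircle.homeomorphCircle_apply]
    _ ≤ ‖f x - φ (e x)‖ := abs_re_le_norm _
    _ < δ := hdist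

theorem exists_differentiable_le_re_le {φ : ℂ → ℝ} (hφ : ContinuousOn φ (sphere 0 1))
    {δ : ℝ} (hδ : 0 < δ) :
    ∃ P : ℂ → ℂ, Differentiable ℂ P ∧
      ∀ z ∈ sphere (0 : ℂ) 1, φ z ≤ (P z).re ∧ (P z).re ≤ φ z + δ := by
  obtain ⟨P, hP, happrox⟩ := exists_differentiable_re_approx hφ (half_pos hδ)
  refine ⟨fun z => P z + (δ / 2 : ℝ), by fun_prop, fun z hz => ?_⟩
  have := abs_lt.1 (happrox z hz)
  simp only [add_re, ofReal_re]
  constructor <;> linarith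

/-- A function `w` has a holomorphic minorant at `z₀` if the modulus of some holomorphic germ lies
below `w` near `z₀` and touches it at `z₀`. This is the form in which log-subharmonicity is used:
having such a germ at every point yields the maximum principle, and the property is immediate for
products and powers. -/
def HasHolomorphicMinorantAt (w : ℂ → ℝ) (z₀ : ℂ) : Prop :=
  ∃ N : ℂ → ℂ, AnalyticAt ℂ N z₀ ∧ ‖N z₀‖ = w z₀ ∧ ∀ᶠ z in 𝓝 z₀, ‖N z‖ ≤ w z

theorem exists_analyticAt_exp_eq {k : ℂ → ℂ} {z₀ : ℂ} (hk : AnalyticAt ℂ k z₀) (hk₀ : k z₀ ≠ 0) :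
    ∃ L : ℂ → ℂ, AnalyticAt ℂ L z₀ ∧ L z₀ = log (k z₀) ∧ ∀ᶠ z in 𝓝 z₀, exp (L z) = k z := by
  have hslit : k z₀ / k z₀ ∈ slitPlane := by simp [hk₀]
  have hdiv : AnalyticAt ℂ (fun z => k z / k z₀) z₀ := hk.div analyticAt_const hk₀
  refine ⟨fun z => log (k z₀) + log (k z / k z₀), analyticAt_const.add (hdiv.clog hslit),
    by simp [hk₀], ?_⟩
  filter_upwards [hdiv.continuousAt.eventually_mem (isOpen_slitPlane.mem_nhds hslit)] with z hz
  rw [Complex.exp_add, Complex.exp_log hk₀, Complex.exp_log (slitPlane_ne_zero hz),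
    mul_div_cancel₀ _ hk₀]

namespace HasHolomorphicMinorantAt

variable {v w : ℂ → ℝ} {z₀ : ℂ}

theorem mul (hv : HasHolomorphicMinorantAt v z₀) (hw : HasHolomorphicMinorantAt w z₀) :
    HasHolomorphicMinorantAt (fun z => v z * w z) z₀ := by
  obtain ⟨M, hM, hM₀, hMv⟩ := hv
  obtain ⟨N, hN, hN₀, hNw⟩ := hw
  refine ⟨fun z => M z * N z, hM.mul hN, by rw [norm_mul, hM₀, hN₀], ?_⟩
  filter_upwards [hMv, hNw] with z hMz hNz
  rw [norm_mul]
  exact mul_le_mul hMz hNz (norm_nonneg _) ((norm_nonneg _).trans hMz)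

theorem rpow (hw : HasHolomorphicMinorantAt w z₀) {q : ℝ} (hq : 0 < q) :
    HasHolomorphicMinorantAt (fun z => w z ^ q) z₀ := by
  obtain ⟨N, hN, hN₀, hNw⟩ := hw
  rcases eq_or_ne (N z₀) 0 with h₀ | h₀
  · refine ⟨fun _ => 0, analyticAt_const, ?_, ?_⟩
    · simp [← hN₀, h₀, Real.zero_rpow hq.ne']
    · filter_upwards [hNw] with z hz
      simpa using Real.rpow_nonneg ((norm_nonneg _).trans hz) q
  · obtain ⟨L, hL, -, hexp⟩ := exists_analyticAt_exp_eq hN h₀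
    have hnorm : ∀ᶠ z in 𝓝 z₀, ‖exp (q * L z)‖ = ‖N z‖ ^ q := by
      filter_upwards [hexp] with z hz
      rw [← hz, norm_exp, norm_exp, ← Real.exp_mul, re_ofReal_mul, mul_comm]
    refine ⟨fun z => exp (q * L z), by fun_prop, ?_, ?_⟩
    · rw [hnorm.self_of_nhds, hN₀]
    · filter_upwards [hnorm, hNw] with z hz hNz
      rw [hz]
      exact Real.rpow_le_rpow (norm_nonneg _) hNz hq.le

end HasHolomorphicMinorantAt

theorem hasHolomorphicMinorantAt_norm {E : Type*} [NormedAddCommGroup E]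
    [NormedSpace ℂ E] {H : ℂ → E} {z₀ : ℂ} (hH : AnalyticAt ℂ H z₀) :
    HasHolomorphicMinorantAt (fun z => ‖H z‖) z₀ := by
  obtain ⟨ℓ, hℓ, hℓH⟩ := exists_dual_vector'' ℂ (H z₀)
  exact ⟨fun z => ℓ (H z), ℓ.analyticAt _ |>.comp hH, by simp [hℓH], Eventually.of_forall fun z =>
    (ℓ.le_opNorm _).trans (mul_le_of_le_one_left (norm_nonneg _) hℓ)⟩

theorem HasHolomorphicMinorantAt.le_of_forall_frontier_le {K : Set ℂ} (hK : IsCompact K) {w : ℂ → ℝ}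
    (hw : ContinuousOn w K) (hmin : ∀ z ∈ interior K, HasHolomorphicMinorantAt w z) {C : ℝ}
    (hC : ∀ z ∈ frontier K, w z ≤ C) {z : ℂ} (hz : z ∈ K) : w z ≤ C := by
  obtain ⟨m, hm, hmax⟩ := hK.exists_isMaxOn ⟨z, hz⟩ hw
  refine (hmax hz).trans ?_
  by_contra! hCm
  let S : Set ℂ := K ∩ w ⁻¹' {w m}
  have hclosed : IsClosed S := hw.preimage_isClosed_of_isClosed hK.isClosed isClosed_singleton
  have hopen : IsOpen S := by
    refine isOpen_iff_mem_nhds.2 fun y hy => ?_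
    have hyK : y ∈ interior K := by
      by_contra hy'
      exact (hC y ⟨subset_closure hy.1, hy'⟩).not_gt (hy.2 ▸ hCm)
    obtain ⟨N, hN, hNy, hNw⟩ := hmin y hyK
    have hmem : ∀ᶠ x in 𝓝 y, x ∈ K := mem_interior_iff_mem_nhds.1 hyK
    have hNmax : IsLocalMax (norm ∘ N) y := by
      filter_upwards [hNw, hmem] with x hx hxK
      exact hx.trans ((hmax hxK).trans (hy.2.symm.le.trans hNy.symm.le))
    filter_upwards [Complex.eventually_eq_of_isLocalMax_norm
      (Complex.analyticAt_iff_eventually_differentiableAt.1 hN) hNmax, hNw, hmem] with x hNx hx hxK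
    refine ⟨hxK, le_antisymm (hmax hxK) ?_⟩
    rwa [hNx, hNy, hy.2] at hx
  have huniv : S = Set.univ := IsClopen.eq_univ ⟨hclosed, hopen⟩ ⟨m, hm, rfl⟩
  exact noncompact_univ ℂ (huniv ▸ hK.of_isClosed_subset hclosed Set.inter_subset_left)

theorem exists_differentiable_exp_re_majorant {w φ : ℂ → ℝ} (hw : ContinuousOn w (closedBall 0 1))
    (hmin : ∀ z ∈ ball (0 : ℂ) 1, HasHolomorphicMinorantAt w z) (hφ : ContinuousOn φ (sphere 0 1))
    (hle : ∀ z ∈ sphere (0 : ℂ) 1, w z ≤ Real.exp (φ z)) {δ : ℝ} (hδ : 0 < δ) :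
    ∃ P : ℂ → ℂ, Differentiable ℂ P ∧
      (∀ z ∈ closedBall (0 : ℂ) 1, w z ≤ Real.exp (P z).re) ∧
      ∀ z ∈ sphere (0 : ℂ) 1, (P z).re ≤ φ z + δ := by
  obtain ⟨P, hP, hPφ⟩ := exists_differentiable_le_re_le hφ hδ
  refine ⟨P, hP, fun z hz => ?_, fun z hz => (hPφ z hz).2⟩
  have hnorm (z : ℂ) : ‖exp (-P z)‖ = (Real.exp (P z).re)⁻¹ := by
    rw [norm_exp, neg_re, Real.exp_neg]
  have hquot : w z * ‖exp (-P z)‖ ≤ 1 := by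
    refine HasHolomorphicMinorantAt.le_of_forall_frontier_le (w := fun z => w z * ‖exp (-P z)‖)
      (isCompact_closedBall 0 1) ?_ (fun y hy => ?_) (fun y hy => ?_) hz
    · have := hP.continuous
      fun_prop
    · rw [interior_closedBall _ one_ne_zero] at hy
      exact (hmin y hy).mul (hasHolomorphicMinorantAt_norm (hP.analyticAt y).neg.cexp)
    · rw [frontier_closedBall _ one_ne_zero] at hy
      rw [hnorm, mul_inv_le_iff₀ (Real.exp_pos _), one_mul]
      exact (hle y hy).trans (Real.exp_le_exp.2 (hPφ y hy).1)
  rwa [hnorm, mul_inv_le_iff₀ (Real.exp_pos _), one_mul] at hquot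

theorem circleAverage_mono_of_continuousOn {u v : ℂ → ℝ} {c : ℂ} {R : ℝ} (hR : 0 ≤ R)
    (hu : ContinuousOn u (sphere c R)) (hv : ContinuousOn v (sphere c R))
    (huv : ∀ z ∈ sphere c R, u z ≤ v z) : circleAverage u c R ≤ circleAverage v c R :=
  circleAverage_mono (hu.circleIntegrable hR) (hv.circleIntegrable hR) (by rwa [abs_of_nonneg hR])

theorem integral_exp_re_segment_le {P : ℂ → ℂ} (hP : Differentiable ℂ P) :
    (∫ x in (-1 : ℝ)..1, Real.exp (P x).re) ≤
      π * circleAverage (fun z => Real.exp (P z).re) 0 1 := by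
  have hG : Differentiable ℂ fun z => exp (P z / 2) := by fun_prop
  have hsq (z : ℂ) : ‖exp (P z / 2)‖ ^ 2 = Real.exp (P z).re := by
    rw [norm_exp, ← Real.exp_nat_mul, div_ofNat_re]
    push_cast
    ring_nf
  simpa only [hsq] using integral_norm_sq_segment_le hG

namespace HasHolomorphicMinorantAt

variable {w : ℂ → ℝ} (hw : ContinuousOn w (closedBall 0 1))
  (hmin : ∀ z ∈ ball (0 : ℂ) 1, HasHolomorphicMinorantAt w z)

include hw hmin

theorem nonneg_of_mem_closedBall {z : ℂ} (hz : z ∈ closedBall (0 : ℂ) 1) : 0 ≤ w z := by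
  rw [← closure_ball _ one_ne_zero] at hw hz
  refine le_on_closure (fun y hy => ?_) continuousOn_const hw hz
  obtain ⟨N, -, hN, -⟩ := hmin y hy
  exact hN ▸ norm_nonneg _

theorem integral_segment_le :
    (∫ x in (-1 : ℝ)..1, w x) ≤ π * circleAverage w 0 1 := by
  have hwS : ContinuousOn w (sphere 0 1) := hw.mono Metric.sphere_subset_closedBall
  have hseg : ∀ x ∈ Set.Icc (-1 : ℝ) 1, (x : ℂ) ∈ closedBall (0 : ℂ) 1 := fun x hx => by
    simpa using abs_le.2 hx
  have hpos (ε : ℝ) (hε : 0 < ε) : ∀ z ∈ sphere (0 : ℂ) 1, 0 < w z + ε := fun z hz =>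
    add_pos_of_nonneg_of_pos
      (nonneg_of_mem_closedBall hw hmin (Metric.sphere_subset_closedBall hz)) hε
  have hε (ε : ℝ) (hε : 0 < ε) :
      (∫ x in (-1 : ℝ)..1, w x) ≤ π * (Real.exp ε * (circleAverage w 0 1 + ε)) := by
    obtain ⟨P, hP, hwP, hPw⟩ := exists_differentiable_exp_re_majorant hw hmin
      (φ := fun z => Real.log (w z + ε))
      ((hwS.add continuousOn_const).log fun z hz => (hpos ε hε z hz).ne')
      (fun z hz => by rw [Real.exp_log (hpos ε hε z hz)]; linarith) hε
    have hPc := hP.continuous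
    have hsphere : ∀ z ∈ sphere (0 : ℂ) 1, Real.exp (P z).re ≤ Real.exp ε * (w z + ε) := by
      intro z hz
      rw [← Real.exp_log (hpos ε hε z hz), ← Real.exp_add, add_comm ε]
      exact Real.exp_le_exp.2 (hPw z hz)
    calc (∫ x in (-1 : ℝ)..1, w x) ≤ ∫ x in (-1 : ℝ)..1, Real.exp (P x).re :=
          intervalIntegral.integral_mono_on (by norm_num)
            ((hw.comp continuous_ofReal.continuousOn hseg).intervalIntegrable_of_Icc (by norm_num))
            (Continuous.intervalIntegrable (by fun_prop) _ _) fun x hx => hwP x (hseg x hx)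
      _ ≤ π * circleAverage (fun z => Real.exp (P z).re) 0 1 := integral_exp_re_segment_le hP
      _ ≤ π * circleAverage (fun z => Real.exp ε * (w z + ε)) 0 1 := by
          refine mul_le_mul_of_nonneg_left ?_ pi_pos.le
          exact circleAverage_mono_of_continuousOn zero_le_one (by fun_prop) (by fun_prop) hsphere
      _ = π * (Real.exp ε * (circleAverage w 0 1 + ε)) := by
          simp only [← smul_eq_mul (Real.exp ε), circleAverage_fun_smul]
          rw [circleAverage_fun_add (hwS.circleIntegrable zero_le_one)
            (circleIntegrable_const ..), circleAverage_const]
  have hlim : Tendsto (fun ε => π * (Real.exp ε * (circleAverage w 0 1 + ε))) (𝓝[>] 0)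
      (𝓝 (π * (Real.exp 0 * (circleAverage w 0 1 + 0)))) :=
    (Continuous.tendsto (by fun_prop) 0).mono_left nhdsWithin_le_nhds
  simpa using ge_of_tendsto hlim (eventually_mem_nhdsWithin.mono hε)

theorem le_exp_circleAverage {φ : ℂ → ℝ} (hφ : ContinuousOn φ (sphere 0 1))
    (hle : ∀ z ∈ sphere (0 : ℂ) 1, w z ≤ Real.exp (φ z)) :
    w 0 ≤ Real.exp (circleAverage φ 0 1) := by
  have hδ (δ : ℝ) (hδ : 0 < δ) : w 0 ≤ Real.exp (circleAverage φ 0 1 + δ) := by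
    obtain ⟨P, hP, hwP, hPφ⟩ := exists_differentiable_exp_re_majorant hw hmin hφ hle hδ
    have hPc := hP.continuous
    refine (hwP 0 (by simp)).trans (Real.exp_le_exp.2 ?_)
    calc (P 0).re = circleAverage (fun z => (P z).re) 0 1 := by
          rw [← hP.diffContOnCl.circleAverage (R := 1)]
          exact (reCLM.circleAverage_comp_comm
            (hPc.continuousOn.circleIntegrable zero_le_one)).symm
      _ ≤ circleAverage (fun z => φ z + δ) 0 1 :=
          circleAverage_mono_of_continuousOn zero_le_one (by fun_prop) (by fun_prop) hPφ
      _ = circleAverage φ 0 1 + δ := by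
          rw [circleAverage_fun_add (hφ.circleIntegrable zero_le_one)
            (circleIntegrable_const ..), circleAverage_const]
  have hlim : Tendsto (fun δ => Real.exp (circleAverage φ 0 1 + δ)) (𝓝[>] 0)
      (𝓝 (Real.exp (circleAverage φ 0 1 + 0))) :=
    (Continuous.tendsto (by fun_prop) 0).mono_left nhdsWithin_le_nhds
  simpa using ge_of_tendsto hlim (eventually_mem_nhdsWithin.mono hδ)

end HasHolomorphicMinorantAt

theorem continuous_re_cpow_ofReal {α : ℝ} (hα : 0 < α) :
    Continuous fun ζ : ℂ => (ζ ^ (α : ℂ)).re := by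
  refine continuous_iff_continuousAt.2 fun ζ => ?_
  rcases eq_or_ne ζ 0 with rfl | hζ
  · have hcpow : ContinuousAt (fun ζ : ℂ => ζ ^ (α : ℂ)) 0 :=
      ContinuousAt.comp (f := fun ζ : ℂ => (ζ, (α : ℂ)))
        (continuousAt_cpow_zero_of_re_pos (z := α) (by simpa)) (by fun_prop)
    exact continuous_re.continuousAt.comp hcpow
  · -- Unlike `arg`, the unoriented angle is continuous away from zero; its cosines are the same.
    have hangle : ContinuousAt (fun z : ℂ => InnerProductGeometry.angle 1 z) ζ :=
      ContinuousAt.comp (f := fun z : ℂ => ((1 : ℂ), z))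
        (InnerProductGeometry.continuousAt_angle (x := ((1 : ℂ), ζ)) one_ne_zero hζ) (by fun_prop)
    have hpolar : ContinuousAt (fun z : ℂ => ‖z‖ ^ α *
        Real.cos (InnerProductGeometry.angle 1 z * α)) ζ :=
      (continuousAt_id.norm.rpow_const (Or.inr hα.le)).mul
        (Real.continuous_cos.continuousAt.comp (hangle.mul continuousAt_const))
    refine hpolar.congr ?_
    filter_upwards [isOpen_ne.mem_nhds hζ] with z hz
    rw [angle_one_left hz, cpow_ofReal_re, ← Real.cos_abs (z.arg * α), abs_mul, abs_of_pos hα]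

theorem abs_arg_exp_le_abs_im (L : ℂ) : |(exp L).arg| ≤ |L.im| := by
  rcases le_or_gt π |L.im| with h | h
  · exact (abs_arg_le_pi _).trans h
  · obtain ⟨h₁, h₂⟩ := abs_lt.1 h
    rw [← log_im, log_exp h₁ h₂.le]

theorem re_exp_mul_le_re_exp_cpow {α : ℝ} {L : ℂ} (hL : |α * L.im| ≤ π) :
    (exp (α * L)).re ≤ (exp L ^ (α : ℂ)).re := by
  rw [cpow_ofReal_re, exp_re, norm_exp, ← Real.exp_mul, re_ofReal_mul, im_ofReal_mul,
    mul_comm α L.re]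
  gcongr ?_ * ?_
  rw [← Real.cos_abs (α * L.im), ← Real.cos_abs (_ * α)]
  refine Real.cos_le_cos_of_nonneg_of_le_pi (abs_nonneg _) hL ?_
  rw [abs_mul, abs_mul, mul_comm]
  exact mul_le_mul_of_nonneg_left (abs_arg_exp_le_abs_im L) (abs_nonneg α)

theorem hasHolomorphicMinorantAt_exp_re_cpow {k : ℂ → ℂ} {z₀ : ℂ} (hk : AnalyticAt ℂ k z₀)
    (hk₀ : k z₀ ≠ 0) {α : ℝ} (hα : |α| < 1) :
    HasHolomorphicMinorantAt (fun z => Real.exp (k z ^ (α : ℂ)).re) z₀ := by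
  obtain ⟨L, hL, hL₀, hexp⟩ := exists_analyticAt_exp_eq hk hk₀
  have him : ∀ᶠ z in 𝓝 z₀, |α * (L z).im| < π := by
    refine ContinuousAt.eventually_lt (by have := hL.continuousAt; fun_prop) continuousAt_const ?_
    rw [hL₀, log_im, abs_mul]
    nlinarith [abs_arg_le_pi (k z₀), pi_pos, abs_nonneg α]
  refine ⟨fun z => exp (exp (α * L z)), by fun_prop, ?_, ?_⟩
  · simp only [norm_exp, hL₀, cpow_def_of_ne_zero hk₀, mul_comm]
  · filter_upwards [hexp, him] with z hz hzim
    rw [norm_exp, ← hz]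
    exact Real.exp_le_exp.2 (re_exp_mul_le_re_exp_cpow hzim.le)

theorem re_cpow_le_circleAverage_of_ne_zero {k : ℂ → ℂ} (hk : DiffContOnCl ℂ k (ball 0 1))
    (hk₀ : k 0 ≠ 0) {α : ℝ} (hα : 0 < α) (hα₁ : α < 1) :
    (k 0 ^ (α : ℂ)).re ≤ circleAverage (fun z => (k z ^ (α : ℂ)).re) 0 1 := by
  have hkc : ContinuousOn k (closedBall 0 1) := hk.continuousOn_ball
  have hcpow : ContinuousOn (fun z => (k z ^ (α : ℂ)).re) (closedBall 0 1) :=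
    (continuous_re_cpow_ofReal hα).comp_continuousOn hkc
  have hcpowS := hcpow.mono Metric.sphere_subset_closedBall
  have han : ∀ z ∈ ball (0 : ℂ) 1, AnalyticAt ℂ k z :=
    hk.differentiableOn.analyticOnNhd Metric.isOpen_ball
  obtain ⟨C, hC⟩ := (isCompact_closedBall (0 : ℂ) 1).exists_bound_of_continuousOn hkc
  have hC₀ : 0 < C := (norm_pos_iff.2 hk₀).trans_le (hC 0 (by simp))
  -- The factor `‖k‖ ^ η` provides the minorant at the zeros of `k`.
  have hη (η : ℝ) (hη : 0 < η) : ‖k 0‖ ^ η * Real.exp (k 0 ^ (α : ℂ)).re ≤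
      C ^ η * Real.exp (circleAverage (fun z => (k z ^ (α : ℂ)).re) 0 1) := by
    have hle := HasHolomorphicMinorantAt.le_exp_circleAverage
      (w := fun z => ‖k z‖ ^ η * Real.exp (k z ^ (α : ℂ)).re)
      (φ := fun z => η * Real.log C + (k z ^ (α : ℂ)).re)
      ((hkc.norm.rpow_const fun _ _ => Or.inr hη.le).mul hcpow.rexp) (fun z hz => ?_)
      (by fun_prop) (fun z hz => ?_)
    · rwa [circleAverage_fun_add (circleIntegrable_const ..)
        (hcpowS.circleIntegrable zero_le_one), circleAverage_const, Real.exp_add, mul_comm η,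
        ← Real.rpow_def_of_pos hC₀] at hle
    · rcases eq_or_ne (k z) 0 with h₀ | h₀
      · exact ⟨fun _ => 0, analyticAt_const, by simp [h₀, Real.zero_rpow hη.ne'],
          Eventually.of_forall fun y => norm_zero.trans_le (by positivity)⟩
      · exact ((hasHolomorphicMinorantAt_norm (han z hz)).rpow hη).mul
          (hasHolomorphicMinorantAt_exp_re_cpow (han z hz) h₀ (by rwa [abs_of_pos hα]))
    · rw [Real.exp_add, mul_comm η, ← Real.rpow_def_of_pos hC₀]
      gcongr
      exact hC z (Metric.sphere_subset_closedBall hz)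
  have hlim {b : ℝ} (c : ℝ) (hb : b ≠ 0) :
      Tendsto (fun η : ℝ => b ^ η * c) (𝓝[>] 0) (𝓝 (b ^ (0 : ℝ) * c)) :=
    ((Real.continuousAt_const_rpow hb).mul continuousAt_const).tendsto.mono_left nhdsWithin_le_nhds
  have := le_of_tendsto_of_tendsto (hlim _ (norm_ne_zero_iff.2 hk₀)) (hlim _ hC₀.ne')
    (eventually_mem_nhdsWithin.mono hη)
  simpa using this

theorem re_cpow_le_circleAverage {k : ℂ → ℂ} (hk : DiffContOnCl ℂ k (ball 0 1))
    {α : ℝ} (hα : 0 < α) (hα₁ : α < 1) :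
    (k 0 ^ (α : ℂ)).re ≤ circleAverage (fun z => (k z ^ (α : ℂ)).re) 0 1 := by
  have hcpow := continuous_re_cpow_ofReal hα
  have hkS : Continuous fun θ : ℝ => k (circleMap 0 1 θ) :=
    (hk.continuousOn_ball.mono Metric.sphere_subset_closedBall).comp_continuous
      (by fun_prop) fun θ => by simp
  have hmean : Continuous fun s : ℂ => circleAverage (fun z => ((k z + s) ^ (α : ℂ)).re) 0 1 := by
    have hjoint : Continuous fun y : ℂ × ℝ => ((k (circleMap 0 1 y.2) + y.1) ^ (α : ℂ)).re :=
      hcpow.comp ((hkS.comp continuous_snd).add continuous_fst)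
    exact (intervalIntegral.continuous_parametric_intervalIntegral_of_continuous' (μ := volume)
      hjoint 0 (2 * π)).const_smul (2 * π)⁻¹
  have hne : ∀ s ∈ ({-k 0}ᶜ : Set ℂ), ((k 0 + s) ^ (α : ℂ)).re ≤
      circleAverage (fun z => ((k z + s) ^ (α : ℂ)).re) 0 1 := fun s hs =>
    re_cpow_le_circleAverage_of_ne_zero (hk.add_const s)
      (fun h => hs (eq_neg_of_add_eq_zero_right h)) hα hα₁
  have h₀ : (0 : ℂ) ∈ closure {-k 0}ᶜ := by simp
  have hcenter : Continuous fun s : ℂ => ((k 0 + s) ^ (α : ℂ)).re :=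
    hcpow.comp (continuous_const.add continuous_id)
  simpa only [add_zero] using le_on_closure hne hcenter.continuousOn hmean.continuousOn h₀

theorem mul_sin_le_sin_mul {a x : ℝ} (ha₀ : 0 ≤ a) (ha₁ : a ≤ 1) (hx₀ : 0 ≤ x) (hx : x ≤ π) :
    a * Real.sin x ≤ Real.sin (a * x) := by
  simpa using strictConcaveOn_sin_Icc.concaveOn.2 ⟨hx₀, hx⟩ ⟨le_rfl, pi_pos.le⟩ ha₀
    (sub_nonneg.2 ha₁) (add_sub_cancel a 1)

theorem sin_mul_mul_cos_le {κ x : ℝ} (hκ₀ : 0 ≤ κ) (hκ₁ : κ ≤ 1) (hx₀ : 0 ≤ x) (hx : x ≤ π / 2) :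
    Real.sin (κ * x) * Real.cos x ≤ κ * Real.cos (κ * x) * Real.sin x := by
  have hκ : 0 < 1 + κ := by linarith
  have hconcave := mul_sin_le_sin_mul (a := (1 - κ) / (1 + κ)) (x := (1 + κ) * x)
    (div_nonneg (by linarith) hκ.le) ((div_le_one hκ).2 (by linarith)) (by positivity)
    (by nlinarith)
  rw [← mul_assoc, div_mul_cancel₀ _ hκ.ne', div_mul_eq_mul_div, div_le_iff₀ hκ] at hconcave
  simp only [add_mul, sub_mul, one_mul, Real.sin_add, Real.sin_sub] at hconcave
  linarith

theorem monotoneOn_sin_mul_div_sin {κ : ℝ} (hκ₀ : 0 ≤ κ) (hκ₁ : κ ≤ 1) :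
    MonotoneOn (fun x => Real.sin (κ * x) / Real.sin x) (Set.Ioc 0 (π / 2)) := by
  have hderiv : ∀ x ∈ Set.Ioc 0 (π / 2), HasDerivAt (fun x => Real.sin (κ * x) / Real.sin x)
      ((κ * Real.cos (κ * x) * Real.sin x - Real.sin (κ * x) * Real.cos x) / Real.sin x ^ 2) x := by
    intro x hx
    have hsin : Real.sin x ≠ 0 :=
      (Real.sin_pos_of_pos_of_lt_pi hx.1 (by linarith [hx.2, pi_pos])).ne'
    refine ((hasDerivAt_const_mul κ).sin.div (Real.hasDerivAt_sin x) hsin).congr_deriv ?_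
    ring
  refine monotoneOn_of_hasDerivWithinAt_nonneg (convex_Ioc ..)
    (fun x hx => (hderiv x hx).continuousAt.continuousWithinAt)
    (fun x hx => (hderiv x (interior_subset hx)).hasDerivWithinAt) fun x hx => ?_
  obtain ⟨hx₀, hx₁⟩ := interior_subset hx
  exact div_nonneg (sub_nonneg.2 (sin_mul_mul_cos_le hκ₀ hκ₁ hx₀.le hx₁)) (sq_nonneg _)

theorem hasDerivAt_one_add_mul_cos_mul_cos_rpow (t q : ℝ) {x : ℝ} (hx : 0 < Real.cos x) :
    HasDerivAt (fun x => (1 + t * Real.cos (q * x)) * Real.cos x ^ (-q))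
      (q * Real.cos x ^ (-q - 1) * (Real.sin x - t * Real.sin ((q - 1) * x))) x := by
  refine ((((hasDerivAt_const_mul q).cos.const_mul t).const_add 1).mul
    ((Real.hasDerivAt_cos x).rpow_const (p := -q) (Or.inl hx.ne'))).congr_deriv ?_
  have hpow : Real.cos x ^ (-q) = Real.cos x ^ (-q - 1) * Real.cos x := by
    rw [← Real.rpow_add_one hx.ne', sub_add_cancel]
  rw [hpow, sub_mul q 1 x, one_mul, Real.sin_sub]
  ring

section HalfAngle

variable {q : ℝ}

theorem pi_div_two_mul_mem_Ioo (hq : 1 < q) : π / (2 * q) ∈ Set.Ioo 0 (π / 2) := by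
  refine ⟨by positivity, ?_⟩
  rw [div_lt_div_iff₀ (by positivity) two_pos]
  nlinarith [pi_pos]

theorem cos_pi_div_two_mul_pos (hq : 1 < q) : 0 < Real.cos (π / (2 * q)) :=
  Real.cos_pos_of_mem_Ioo ⟨by linarith [(pi_div_two_mul_mem_Ioo hq).1, pi_pos],
    (pi_div_two_mul_mem_Ioo hq).2⟩

theorem one_le_tan_pi_div_two_mul (hq₁ : 1 < q) (hq₂ : q ≤ 2) : 1 ≤ Real.tan (π / (2 * q)) := by
  rw [← Real.tan_pi_div_four]
  refine Real.strictMonoOn_tan.monotoneOn ?_ ?_ ?_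
  · constructor <;> linarith [pi_pos]
  · exact Set.Ioo_subset_Ioo_left (by linarith [pi_pos]) (pi_div_two_mul_mem_Ioo hq₁)
  · exact div_le_div_of_nonneg_left pi_pos.le (by positivity) (by linarith)

theorem sin_sub_one_mul_pi_div_two_mul_div_sin (hq : 1 < q) :
    Real.sin ((q - 1) * (π / (2 * q))) / Real.sin (π / (2 * q)) = (Real.tan (π / (2 * q)))⁻¹ := by
  have hangle : (q - 1) * (π / (2 * q)) = π / 2 - π / (2 * q) := by field_simp
  rw [hangle, Real.sin_pi_div_two_sub, Real.tan_eq_sin_div_cos, inv_div]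

theorem tan_mul_sin_sub_one_mul_le_sin {x : ℝ} (hq₁ : 1 < q) (hq₂ : q ≤ 2) (hx₀ : 0 < x)
    (hx : x ≤ π / (2 * q)) : Real.tan (π / (2 * q)) * Real.sin ((q - 1) * x) ≤ Real.sin x := by
  have hγ := pi_div_two_mul_mem_Ioo hq₁
  have hmono := monotoneOn_sin_mul_div_sin (κ := q - 1) (by linarith) (by linarith)
    ⟨hx₀, hx.trans hγ.2.le⟩ ⟨hγ.1, hγ.2.le⟩ hx
  have hsin := Real.sin_pos_of_pos_of_lt_pi hx₀ (by linarith [hγ.2, pi_pos])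
  have htan := Real.tan_pos_of_pos_of_lt_pi_div_two hγ.1 hγ.2
  simp only [sin_sub_one_mul_pi_div_two_mul_div_sin hq₁] at hmono
  rwa [div_le_iff₀ hsin, inv_mul_eq_div, le_div_iff₀' htan] at hmono

theorem sin_le_tan_mul_sin_sub_one_mul {x : ℝ} (hq₁ : 1 < q) (hq₂ : q ≤ 2)
    (hx₀ : π / (2 * q) ≤ x) (hx : x ≤ π / 2) :
    Real.sin x ≤ Real.tan (π / (2 * q)) * Real.sin ((q - 1) * x) := by
  have hγ := pi_div_two_mul_mem_Ioo hq₁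
  have hmono := monotoneOn_sin_mul_div_sin (κ := q - 1) (by linarith) (by linarith)
    ⟨hγ.1, hγ.2.le⟩ ⟨hγ.1.trans_le hx₀, hx⟩ hx₀
  have hsin := Real.sin_pos_of_pos_of_lt_pi (hγ.1.trans_le hx₀) (by linarith [pi_pos])
  have htan := Real.tan_pos_of_pos_of_lt_pi_div_two hγ.1 hγ.2
  simp only [sin_sub_one_mul_pi_div_two_mul_div_sin hq₁] at hmono
  rwa [le_div_iff₀ hsin, inv_mul_le_iff₀ htan] at hmono

theorem one_add_tan_mul_cos_mul_cos_rpow_neg_le {u : ℝ} (hq₁ : 1 < q) (hq₂ : q ≤ 2)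
    (hu : u ∈ Set.Ico 0 (π / 2)) :
    (1 + Real.tan (π / (2 * q)) * Real.cos (q * u)) * Real.cos u ^ (-q) ≤
      Real.cos (π / (2 * q)) ^ (-q) := by
  have hγ := pi_div_two_mul_mem_Ioo hq₁
  have hcos : ∀ x ∈ Set.Ico 0 (π / 2), 0 < Real.cos x := fun x hx =>
    Real.cos_pos_of_mem_Ioo ⟨by linarith [hx.1, pi_pos], hx.2⟩
  have hderiv := fun x hx =>
    hasDerivAt_one_add_mul_cos_mul_cos_rpow (Real.tan (π / (2 * q))) q (hcos x hx)
  have hfactor : ∀ x ∈ Set.Ico 0 (π / 2), 0 ≤ q * Real.cos x ^ (-q - 1) := fun x hx =>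
    mul_nonneg (by linarith) (Real.rpow_nonneg (hcos x hx).le _)
  have hvalue : (1 + Real.tan (π / (2 * q)) * Real.cos (q * (π / (2 * q)))) *
      Real.cos (π / (2 * q)) ^ (-q) = Real.cos (π / (2 * q)) ^ (-q) := by
    have : q * (π / (2 * q)) = π / 2 := by field_simp
    simp [this]
  rw [← hvalue]
  rcases le_total u (π / (2 * q)) with h | h
  · have hsub : Set.Icc 0 (π / (2 * q)) ⊆ Set.Ico 0 (π / 2) := fun x hx =>
      ⟨hx.1, hx.2.trans_lt hγ.2⟩
    refine monotoneOn_of_hasDerivWithinAt_nonneg (convex_Icc 0 (π / (2 * q)))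
      (fun x hx => (hderiv x (hsub hx)).continuousAt.continuousWithinAt)
      (fun x hx => (hderiv x (hsub (interior_subset hx))).hasDerivWithinAt) (fun x hx => ?_)
      ⟨hu.1, h⟩ ⟨hγ.1.le, le_rfl⟩ h
    rw [interior_Icc] at hx
    exact mul_nonneg (hfactor x (hsub (Set.Ioo_subset_Icc_self hx)))
      (sub_nonneg.2 (tan_mul_sin_sub_one_mul_le_sin hq₁ hq₂ hx.1 hx.2.le))
  · have hsub : Set.Icc (π / (2 * q)) u ⊆ Set.Ico 0 (π / 2) := fun x hx =>
      ⟨hγ.1.le.trans hx.1, hx.2.trans_lt hu.2⟩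
    refine antitoneOn_of_hasDerivWithinAt_nonpos (convex_Icc (π / (2 * q)) u)
      (fun x hx => (hderiv x (hsub hx)).continuousAt.continuousWithinAt)
      (fun x hx => (hderiv x (hsub (interior_subset hx))).hasDerivWithinAt) (fun x hx => ?_)
      ⟨le_rfl, h⟩ ⟨h, le_rfl⟩ h
    have hx := interior_subset hx
    exact mul_nonpos_of_nonneg_of_nonpos (hfactor x (hsub hx)) (sub_nonpos.2
      (sin_le_tan_mul_sin_sub_one_mul hq₁ hq₂ hx.1 (hx.2.trans hu.2.le)))

theorem cos_rpow_mul_one_add_tan_mul_cos_le {u : ℝ} (hq₁ : 1 < q) (hq₂ : q ≤ 2)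
    (hu : u ∈ Set.Icc 0 (π / 2)) :
    Real.cos (π / (2 * q)) ^ q * (1 + Real.tan (π / (2 * q)) * Real.cos (q * u)) ≤
      Real.cos u ^ q := by
  have hIco : ∀ u ∈ Set.Ico 0 (π / 2), Real.cos (π / (2 * q)) ^ q *
      (1 + Real.tan (π / (2 * q)) * Real.cos (q * u)) ≤ Real.cos u ^ q := by
    intro u hu
    have hcos : 0 < Real.cos u :=
      Real.cos_pos_of_mem_Ioo ⟨by linarith [hu.1, pi_pos], hu.2⟩
    have hcosγ := cos_pi_div_two_mul_pos hq₁
    have hle := one_add_tan_mul_cos_mul_cos_rpow_neg_le hq₁ hq₂ hu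
    rwa [Real.rpow_neg hcos.le, Real.rpow_neg hcosγ.le, ← div_eq_mul_inv,
      div_le_iff₀ (by positivity), inv_mul_eq_div, le_div_iff₀' (by positivity)] at hle
  have hcont : Continuous fun u => Real.cos u ^ q :=
    Real.continuous_cos.rpow_const fun _ => Or.inr (by linarith)
  rw [← closure_Ico pi_div_two_pos.ne] at hu
  exact le_on_closure hIco (by fun_prop) hcont.continuousOn hu

theorem two_mul_cos_rpow_pi_div_two_mul_le_one (hq₁ : 1 < q) (hq₂ : q ≤ 2) :
    2 * Real.cos (π / (2 * q)) ^ q ≤ 1 := by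
  have hzero := cos_rpow_mul_one_add_tan_mul_cos_le hq₁ hq₂ (u := 0) ⟨le_rfl, pi_div_two_pos.le⟩
  simp only [mul_zero, Real.cos_zero, mul_one, Real.one_rpow] at hzero
  nlinarith [one_le_tan_pi_div_two_mul hq₁ hq₂,
    Real.rpow_pos_of_pos (cos_pi_div_two_mul_pos hq₁) q]

end HalfAngle

/-- The constant `(1 - |cos (π / q)|) ^ (-q / 2)` in Kalaj's inequality, which bounds the integral
of `(‖h‖ ^ 2 + ‖g‖ ^ 2) ^ (q / 2)` over the circle by that of `‖h + conj g‖ ^ q`. -/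
noncomputable def kalajConst (q : ℝ) : ℝ := (1 - |Real.cos (π / q)|) ^ (-(q / 2))

theorem sq_rpow_half {x : ℝ} (hx : 0 ≤ x) (q : ℝ) : (x ^ 2) ^ (q / 2) = x ^ q := by
  rw [← Real.rpow_natCast_mul hx, Nat.cast_ofNat, mul_div_cancel₀ q two_ne_zero]

theorem two_mul_sq_rpow_half {x : ℝ} (hx : 0 ≤ x) (q : ℝ) :
    (2 * x ^ 2) ^ (q / 2) = 2 ^ (q / 2) * x ^ q := by
  rw [Real.mul_rpow two_pos.le (sq_nonneg x), sq_rpow_half hx]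

section Kalaj

variable {q : ℝ} (hq₁ : 1 < q) (hq₂ : q ≤ 2)

include hq₁ hq₂

theorem two_rpow_mul_kalajConst :
    2 ^ (q / 2) * kalajConst q = (Real.cos (π / (2 * q)))⁻¹ ^ q := by
  have hcos := cos_pi_div_two_mul_pos hq₁
  have hnonpos : Real.cos (π / q) ≤ 0 := by
    refine Real.cos_nonpos_of_pi_div_two_le_of_le ?_ ?_
    · exact div_le_div_of_nonneg_left pi_pos.le (by positivity) hq₂
    · linarith [div_le_self pi_pos.le hq₁.le, pi_pos]
  have hhalf : 1 - |Real.cos (π / q)| = 2 * Real.cos (π / (2 * q)) ^ 2 := by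
    rw [abs_of_nonpos hnonpos, Real.cos_sq, show 2 * (π / (2 * q)) = π / q by field_simp]
    ring
  rw [kalajConst, hhalf, Real.rpow_neg (by positivity), two_mul_sq_rpow_half hcos.le,
    Real.inv_rpow hcos.le]
  field_simp

theorem one_le_kalajConst_mul_two_rpow : 1 ≤ kalajConst q * 2 ^ (q / 2 - 1) := by
  have hcos := cos_pi_div_two_mul_pos hq₁
  rw [Real.rpow_sub_one two_ne_zero, mul_div_assoc', mul_comm, two_rpow_mul_kalajConst hq₁ hq₂,
    one_le_div two_pos, Real.inv_rpow hcos.le, le_inv_comm₀ two_pos (by positivity), ← one_div,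
    le_div_iff₀' two_pos]
  exact two_mul_cos_rpow_pi_div_two_mul_le_one hq₁ hq₂

theorem one_add_tan_mul_cos_le_kalajConst_mul {θ : ℝ} (hθ : |θ| ≤ π) :
    1 + Real.tan (π / (2 * q)) * Real.cos (q / 2 * θ) ≤
      kalajConst q * (1 + Real.cos θ) ^ (q / 2) := by
  have hcos := cos_pi_div_two_mul_pos hq₁
  have hu : |θ| / 2 ∈ Set.Icc 0 (π / 2) := ⟨by positivity, by linarith⟩
  have hhalf : 1 + Real.cos θ = 2 * Real.cos (|θ| / 2) ^ 2 := by
    rw [Real.cos_sq, mul_div_cancel₀ _ two_ne_zero, Real.cos_abs]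
    ring
  have hangle : Real.cos (q * (|θ| / 2)) = Real.cos (q / 2 * θ) := by
    rw [← Real.cos_abs (q / 2 * θ), abs_mul, abs_of_pos (by positivity : 0 < q / 2)]
    ring_nf
  have hle := cos_rpow_mul_one_add_tan_mul_cos_le hq₁ hq₂ hu
  rw [hangle, mul_comm, ← le_div_iff₀ (by positivity)] at hle
  refine hle.trans_eq ?_
  rw [hhalf, two_mul_sq_rpow_half (Real.cos_nonneg_of_mem_Icc ⟨by linarith [hu.1, pi_pos], hu.2⟩),
    ← mul_assoc, mul_comm (kalajConst q), two_rpow_mul_kalajConst hq₁ hq₂, Real.inv_rpow hcos.le,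
    inv_mul_eq_div]

end Kalaj

theorem monotoneOn_mul_add_rpow_sub_rpow {α A : ℝ} (s : ℝ) (hα₀ : 0 < α) (hα₁ : α ≤ 1)
    (hA : 1 ≤ A * 2 ^ (α - 1)) :
    MonotoneOn (fun R => A * (R + s) ^ α - R ^ α) (Set.Ici |s|) := by
  have hA₀ : 0 ≤ A := nonneg_of_mul_nonneg_left (zero_le_one.trans hA) (by positivity)
  have hpos : ∀ R ∈ Set.Ioi |s|, 0 < R ∧ 0 < R + s ∧ R + s ≤ 2 * R := fun R hR => by
    have := abs_lt.1 (Set.mem_Ioi.1 hR)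
    refine ⟨(abs_nonneg s).trans_lt hR, ?_, ?_⟩ <;> linarith
  have hcont : Continuous fun R : ℝ => A * (R + s) ^ α - R ^ α := by
    fun_prop (disch := positivity)
  refine monotoneOn_of_hasDerivWithinAt_nonneg (convex_Ici _) hcont.continuousOn
    (f' := fun R => α * (A * (R + s) ^ (α - 1) - R ^ (α - 1))) ?_ ?_ <;>
    rw [interior_Ici]
  · intro R hR
    obtain ⟨hR₀, hRs, -⟩ := hpos R hR
    refine HasDerivAt.hasDerivWithinAt <| HasDerivAt.congr_deriv
      (((((hasDerivAt_id R).add_const s).rpow_const (Or.inl hRs.ne')).const_mul A).sub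
        (Real.hasDerivAt_rpow_const (Or.inl hR₀.ne'))) ?_
    rw [id_eq]
    ring
  · intro R hR
    obtain ⟨hR₀, hRs, hR₂⟩ := hpos R hR
    refine mul_nonneg hα₀.le (sub_nonneg.2 ?_)
    calc R ^ (α - 1) ≤ A * 2 ^ (α - 1) * R ^ (α - 1) := le_mul_of_one_le_left (by positivity) hA
      _ = A * (2 * R) ^ (α - 1) := by rw [Real.mul_rpow two_pos.le hR₀.le, mul_assoc]
      _ ≤ A * (R + s) ^ (α - 1) := by
        gcongr ?_ * ?_
        exact Real.rpow_le_rpow_of_nonpos hRs hR₂ (by linarith)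

theorem norm_add_conj_sq (z w : ℂ) :
    ‖z + conj w‖ ^ 2 = ‖z‖ ^ 2 + ‖w‖ ^ 2 + 2 * ‖z * w‖ * Real.cos (z * w).arg := by
  rw [mul_assoc, norm_mul_cos_arg, ← normSq_eq_norm_sq, normSq_add, conj_conj, normSq_conj,
    normSq_eq_norm_sq, normSq_eq_norm_sq]

theorem norm_sq_add_norm_sq_rpow_le {q : ℝ} (hq₁ : 1 < q) (hq₂ : q ≤ 2) (z w : ℂ) :
    (‖z‖ ^ 2 + ‖w‖ ^ 2) ^ (q / 2) ≤ kalajConst q * ‖z + conj w‖ ^ q -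
      Real.tan (π / (2 * q)) * 2 ^ (q / 2) * ((z * w) ^ ((q / 2 : ℝ) : ℂ)).re := by
  set R := ‖z‖ ^ 2 + ‖w‖ ^ 2
  set S := 2 * ‖z * w‖ with hS
  set θ := (z * w).arg
  have hS₀ : 0 ≤ S := by positivity
  have hSR : S ≤ R := by
    rw [hS, norm_mul, ← mul_assoc]
    exact two_mul_le_add_sq ‖z‖ ‖w‖
  have habs : |S * Real.cos θ| ≤ S := by
    rw [abs_mul, abs_of_nonneg hS₀]
    exact mul_le_of_le_one_right hS₀ (Real.abs_cos_le_one θ)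
  have hradial := monotoneOn_mul_add_rpow_sub_rpow (S * Real.cos θ) (by positivity) (by linarith)
    (one_le_kalajConst_mul_two_rpow hq₁ hq₂) habs (habs.trans hSR) hSR
  have hangular := mul_le_mul_of_nonneg_left
    (one_add_tan_mul_cos_le_kalajConst_mul hq₁ hq₂ (abs_arg_le_pi (z * w)))
    (Real.rpow_nonneg hS₀ (q / 2))
  have hfactor : (S + S * Real.cos θ) ^ (q / 2) = S ^ (q / 2) * (1 + Real.cos θ) ^ (q / 2) := by
    rw [← Real.mul_rpow hS₀ (by linarith [Real.neg_one_le_cos θ]), mul_one_add]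
  have hcpow : 2 ^ (q / 2) * ((z * w) ^ ((q / 2 : ℝ) : ℂ)).re =
      S ^ (q / 2) * Real.cos (q / 2 * θ) := by
    rw [cpow_ofReal_re, hS, Real.mul_rpow two_pos.le (norm_nonneg _), mul_comm θ, mul_assoc]
  rw [← sq_rpow_half (norm_nonneg _), norm_add_conj_sq, mul_assoc (Real.tan _), hcpow]
  simp only [hfactor] at hradial
  linarith

theorem re_cpow_nonneg {ζ : ℂ} (hζ : 0 ≤ ζ.re) {α : ℝ} (hα : |α| ≤ 1) : 0 ≤ (ζ ^ (α : ℂ)).re := by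
  rw [cpow_ofReal_re]
  have harg : |ζ.arg * α| ≤ π / 2 := by
    rw [abs_mul]
    exact (mul_le_of_le_one_right (abs_nonneg _) hα).trans (abs_arg_le_pi_div_two_iff.2 hζ)
  exact mul_nonneg (by positivity) (Real.cos_nonneg_of_mem_Icc (abs_le.1 harg))

theorem norm_add_conj_rpow_le (z w : ℂ) {q : ℝ} (hq : 0 ≤ q) :
    ‖z + conj w‖ ^ q ≤ 2 ^ (q / 2) * (‖z‖ ^ 2 + ‖w‖ ^ 2) ^ (q / 2) := by
  rw [← sq_rpow_half (norm_nonneg _), ← Real.mul_rpow two_pos.le (by positivity)]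
  gcongr
  have htri : ‖z + conj w‖ ≤ ‖z‖ + ‖w‖ := by simpa using norm_add_le z (conj w)
  exact (pow_le_pow_left₀ (norm_nonneg _) htri 2).trans (add_sq_le)

section Disc

variable {h g : ℂ → ℂ} (hh : DiffContOnCl ℂ h (ball 0 1)) (hg : DiffContOnCl ℂ g (ball 0 1))

include hh hg

theorem continuousOn_norm_add_conj_rpow {q : ℝ} (hq : 0 ≤ q) :
    ContinuousOn (fun z => ‖h z + conj (g z)‖ ^ q) (closedBall 0 1) :=
  (hh.continuousOn_ball.add
    (continuous_conj.comp_continuousOn hg.continuousOn_ball)).norm.rpow_const fun _ _ => Or.inr hq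

theorem continuousOn_norm_sq_add_norm_sq_rpow {q : ℝ} (hq : 0 ≤ q) :
    ContinuousOn (fun z => (‖h z‖ ^ 2 + ‖g z‖ ^ 2) ^ (q / 2)) (closedBall 0 1) :=
  ((hh.continuousOn_ball.norm.pow 2).add (hg.continuousOn_ball.norm.pow 2)).rpow_const
    fun _ _ => Or.inr (by positivity)

theorem circleAverage_norm_sq_add_norm_sq_rpow_le {q : ℝ} (hq₁ : 1 < q) (hq₂ : q < 2)
    (hre : 0 ≤ (h 0 * g 0).re) :
    circleAverage (fun z => (‖h z‖ ^ 2 + ‖g z‖ ^ 2) ^ (q / 2)) 0 1 ≤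
      kalajConst q * circleAverage (fun z => ‖h z + conj (g z)‖ ^ q) 0 1 := by
  have hq₀ : 0 ≤ q := by linarith
  have hα : 0 < q / 2 := by linarith
  have hα₁ : q / 2 < 1 := by linarith
  have hγ := pi_div_two_mul_mem_Ioo hq₁
  have hsphere := Metric.sphere_subset_closedBall (x := (0 : ℂ)) (ε := 1)
  have hk : DiffContOnCl ℂ (fun z => h z * g z) (ball 0 1) := hh.smul hg
  set v : ℂ → ℝ := fun z => ‖h z + conj (g z)‖ ^ q
  set u : ℂ → ℝ := fun z => ((h z * g z) ^ ((q / 2 : ℝ) : ℂ)).re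
  set B := Real.tan (π / (2 * q)) * 2 ^ (q / 2)
  have hB : 0 ≤ B := mul_nonneg (Real.tan_pos_of_pos_of_lt_pi_div_two hγ.1 hγ.2).le (by positivity)
  have hv : ContinuousOn v (sphere 0 1) :=
    (continuousOn_norm_add_conj_rpow hh hg hq₀).mono hsphere
  have hu : ContinuousOn u (sphere 0 1) :=
    ((continuous_re_cpow_ofReal hα).comp_continuousOn hk.continuousOn_ball).mono hsphere
  have hu₀ : 0 ≤ circleAverage u 0 1 :=
    (re_cpow_nonneg hre (abs_le.2 ⟨by linarith, hα₁.le⟩)).trans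
      (re_cpow_le_circleAverage hk hα hα₁)
  calc circleAverage (fun z => (‖h z‖ ^ 2 + ‖g z‖ ^ 2) ^ (q / 2)) 0 1
      ≤ circleAverage (kalajConst q • v - B • u) 0 1 :=
        circleAverage_mono_of_continuousOn zero_le_one
          ((continuousOn_norm_sq_add_norm_sq_rpow hh hg hq₀).mono hsphere)
          ((hv.const_smul _).sub (hu.const_smul _))
          fun z _ => norm_sq_add_norm_sq_rpow_le hq₁ hq₂.le (h z) (g z)
    _ = kalajConst q * circleAverage v 0 1 - B * circleAverage u 0 1 := by
        rw [circleAverage_sub ((hv.const_smul _).circleIntegrable zero_le_one)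
          ((hu.const_smul _).circleIntegrable zero_le_one), circleAverage_smul,
          circleAverage_smul, smul_eq_mul, smul_eq_mul]
    _ ≤ kalajConst q * circleAverage v 0 1 := sub_le_self _ (mul_nonneg hB hu₀)

theorem integral_norm_sq_add_norm_sq_rpow_segment_le {q : ℝ} (hq : 0 < q) :
    (∫ x in (-1 : ℝ)..1, (‖h x‖ ^ 2 + ‖g x‖ ^ 2) ^ (q / 2)) ≤
      π * circleAverage (fun z => (‖h z‖ ^ 2 + ‖g z‖ ^ 2) ^ (q / 2)) 0 1 := by
  refine HasHolomorphicMinorantAt.integral_segment_le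
    (w := fun z => (‖h z‖ ^ 2 + ‖g z‖ ^ 2) ^ (q / 2))
    (continuousOn_norm_sq_add_norm_sq_rpow hh hg hq.le) fun z hz => ?_
  have han {k : ℂ → ℂ} (hk : DiffContOnCl ℂ k (ball 0 1)) : AnalyticAt ℂ k z :=
    hk.differentiableOn.analyticAt (Metric.isOpen_ball.mem_nhds hz)
  have hpair : AnalyticAt ℂ (fun z => WithLp.toLp 2 (h z, g z)) z :=
    ((WithLp.prodContinuousLinearEquiv 2 ℂ ℂ ℂ).symm.toContinuousLinearMap.analyticAt _).comp
      ((han hh).prod (han hg))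
  have hnorm (z : ℂ) :
      ‖WithLp.toLp 2 (h z, g z)‖ ^ q = (‖h z‖ ^ 2 + ‖g z‖ ^ 2) ^ (q / 2) := by
    rw [← sq_rpow_half (norm_nonneg _), WithLp.prod_norm_sq_eq_of_L2, WithLp.toLp_fst,
      WithLp.toLp_snd]
  simpa only [hnorm] using
    (hasHolomorphicMinorantAt_norm hpair).rpow hq

theorem integral_norm_add_conj_rpow_segment_le_of_re_nonneg {q : ℝ} (hq₁ : 1 < q) (hq₂ : q < 2)
    (hre : 0 ≤ (h 0 * g 0).re) :
    (∫ x in (-1 : ℝ)..1, ‖h x + conj (g x)‖ ^ q) ≤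
      (Real.cos (π / (2 * q)))⁻¹ ^ q *
        (π * circleAverage (fun z => ‖h z + conj (g z)‖ ^ q) 0 1) := by
  have hq₀ : 0 < q := by linarith
  have hseg {w : ℂ → ℝ} (hw : ContinuousOn w (closedBall 0 1)) :
      IntervalIntegrable (fun x : ℝ => w x) volume (-1) 1 := by
    refine (hw.comp continuous_ofReal.continuousOn fun x hx => ?_).intervalIntegrable
    rw [Set.uIcc_of_le (by norm_num)] at hx
    simpa using abs_le.2 hx
  calc (∫ x in (-1 : ℝ)..1, ‖h x + conj (g x)‖ ^ q)
      ≤ ∫ x in (-1 : ℝ)..1, 2 ^ (q / 2) * (‖h x‖ ^ 2 + ‖g x‖ ^ 2) ^ (q / 2) :=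
        intervalIntegral.integral_mono_on (by norm_num)
          (hseg (continuousOn_norm_add_conj_rpow hh hg hq₀.le))
          ((hseg (continuousOn_norm_sq_add_norm_sq_rpow hh hg hq₀.le)).const_mul _)
          fun x _ => norm_add_conj_rpow_le _ _ hq₀.le
    _ ≤ 2 ^ (q / 2) *
        (π * (kalajConst q * circleAverage (fun z => ‖h z + conj (g z)‖ ^ q) 0 1)) := by
        rw [intervalIntegral.integral_const_mul]
        gcongr
        refine (integral_norm_sq_add_norm_sq_rpow_segment_le hh hg hq₀).trans ?_
        gcongr
        exact circleAverage_norm_sq_add_norm_sq_rpow_le hh hg hq₁ hq₂ hre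
    _ = _ := by
        rw [← two_rpow_mul_kalajConst hq₁ hq₂.le]
        ring

theorem integral_norm_add_conj_rpow_segment_le {q : ℝ} (hq₁ : 1 < q) (hq₂ : q < 2) :
    (∫ x in (-1 : ℝ)..1, ‖h x + conj (g x)‖ ^ q) ≤
      (Real.cos (π / (2 * q)))⁻¹ ^ q *
        (π * circleAverage (fun z => ‖h z + conj (g z)‖ ^ q) 0 1) := by
  have := integral_norm_add_conj_rpow_segment_le_of_re_nonneg (hh.add_const (conj (g 0)))
    (hg.sub_const (g 0)) hq₁ hq₂ (by simp)
  simpa only [map_sub, add_add_sub_cancel] using this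

end Disc

theorem circleAverage_comp_mul_left {E : Type*} [NormedAddCommGroup E] [NormedSpace ℝ E]
    (F : ℂ → E) (c : ℂ) : circleAverage (fun z => F (c * z)) 0 1 = circleAverage F 0 ‖c‖ := by
  have hrotate (θ : ℝ) : c * circleMap 0 1 θ = circleMap 0 ‖c‖ (θ + c.arg) := by
    calc c * circleMap 0 1 θ = ‖c‖ * exp (c.arg * I) * circleMap 0 1 θ := by
          rw [norm_mul_exp_arg_mul_I]
      _ = circleMap 0 ‖c‖ (θ + c.arg) := by
          simp only [circleMap, ofReal_one, one_mul, zero_add, ofReal_add, add_mul, Complex.exp_add]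
          ring
  rw [circleAverage_eq_integral_add (f := F) (R := ‖c‖) c.arg, circleAverage]
  simp only [hrotate]

theorem integral_norm_add_conj_rpow_diameter_le {h g : ℂ → ℂ} {r q : ℝ} (hr : 0 < r) (hq₁ : 1 < q)
    (hq₂ : q < 2) (hh : DiffContOnCl ℂ h (ball 0 r)) (hg : DiffContOnCl ℂ g (ball 0 r)) (t : ℝ) :
    (∫ x in (-r)..r, ‖h (x * exp (t * I)) + conj (g (x * exp (t * I)))‖ ^ q) ≤
      r * ((Real.cos (π / (2 * q)))⁻¹ ^ q *
        (π * circleAverage (fun z => ‖h z + conj (g z)‖ ^ q) 0 r)) := by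
  set c : ℂ := r * exp (t * I) with hc
  have hcnorm : ‖c‖ = r := by
    rw [hc, norm_mul, norm_exp_ofReal_mul_I, norm_real, Real.norm_of_nonneg hr.le, mul_one]
  have hscale {k : ℂ → ℂ} (hk : DiffContOnCl ℂ k (ball 0 r)) :
      DiffContOnCl ℂ (fun z => k (c * z)) (ball 0 1) := by
    refine hk.comp (by fun_prop : Differentiable ℂ fun z => c * z).diffContOnCl fun z hz => ?_
    rw [mem_ball_zero_iff] at hz ⊢
    rw [norm_mul, hcnorm]
    exact mul_lt_of_lt_one_right hr hz
  have hunit := integral_norm_add_conj_rpow_segment_le (hscale hh) (hscale hg) hq₁ hq₂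
  rw [circleAverage_comp_mul_left (fun z => ‖h z + conj (g z)‖ ^ q), hcnorm] at hunit
  calc (∫ x in (-r)..r, ‖h (x * exp (t * I)) + conj (g (x * exp (t * I)))‖ ^ q)
      = r * ∫ x in (-1 : ℝ)..1, ‖h (c * x) + conj (g (c * x))‖ ^ q := by
        have hsub := intervalIntegral.mul_integral_comp_mul_left (a := -1) (b := 1) (c := r)
          (f := fun x : ℝ => ‖h (x * exp (t * I)) + conj (g (x * exp (t * I)))‖ ^ q)
        rw [mul_neg, mul_one] at hsub
        simp only [← hsub, hc, ofReal_mul, mul_right_comm]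
    _ ≤ _ := by gcongr

section Limits

variable {Ω E : Type*} [MeasurableSpace Ω] {μ : Measure Ω} [IsFiniteMeasure μ]
  [NormedAddCommGroup E] {f : Ω → E} {p q : ℝ}

theorem integrable_norm_rpow_of_memLp (hf : MemLp f (.ofReal p) μ) (hq : 0 ≤ q)
    (hqp : q ≤ p) : Integrable (fun x => ‖f x‖ ^ q) μ := by
  simpa only [ENNReal.toReal_ofReal hq] using
    (hf.mono_exponent (ENNReal.ofReal_le_ofReal hqp)).integrable_norm_rpow'

theorem rpow_le_one_add_rpow {y : ℝ} (hy : 0 ≤ y) (hq : 0 ≤ q) (hqp : q ≤ p) :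
    y ^ q ≤ 1 + y ^ p := by
  rcases le_total y 1 with h | h
  · linarith [Real.rpow_le_one hy h hq, Real.rpow_nonneg hy p]
  · linarith [Real.rpow_le_rpow_of_exponent_le h hqp]

theorem tendsto_integral_norm_rpow_nhdsLT_s4 (hf : MemLp f (.ofReal p) μ) (hp : 0 < p) :
    Tendsto (fun q : ℝ => ∫ x, ‖f x‖ ^ q ∂μ) (𝓝[<] p) (𝓝 (∫ x, ‖f x‖ ^ p ∂μ)) := by
  have hmem : Set.Ioo 0 p ∈ 𝓝[<] p := Ioo_mem_nhdsLT hp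
  refine tendsto_integral_filter_of_dominated_convergence (fun x => 1 + ‖f x‖ ^ p) ?_ ?_
    ((integrable_const 1).add (integrable_norm_rpow_of_memLp hf hp.le le_rfl))
    (Eventually.of_forall fun x => ?_)
  · filter_upwards [hmem] with q hq
    exact (integrable_norm_rpow_of_memLp hf hq.1.le hq.2.le).aestronglyMeasurable
  · filter_upwards [hmem] with q hq
    refine Eventually.of_forall fun x => ?_
    rw [Real.norm_of_nonneg (by positivity)]
    exact rpow_le_one_add_rpow (norm_nonneg _) hq.1.le hq.2.le
  · exact (Real.continuousAt_const_rpow' hp.ne').tendsto.mono_left nhdsWithin_le_nhds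

theorem rpow_le_min_rpow_add {y N : ℝ} (hy : 0 ≤ y) (hN : 0 < N) (hqp : q ≤ p) :
    y ^ q ≤ min y N ^ q + N ^ (q - p) * y ^ p := by
  rcases le_total y N with h | h
  · rw [min_eq_left h]
    exact le_add_of_nonneg_right (by positivity)
  · calc y ^ q = y ^ (q - p) * y ^ p := by rw [← Real.rpow_add (hN.trans_le h), sub_add_cancel]
      _ ≤ N ^ (q - p) * y ^ p := by
        gcongr ?_ * _
        exact Real.rpow_le_rpow_of_nonpos hN h (by linarith)
      _ ≤ min y N ^ q + N ^ (q - p) * y ^ p :=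
        le_add_of_nonneg_left (Real.rpow_nonneg (le_min hy hN.le) q)

theorem norm_min_norm_rpow_le (y : E) {N : ℝ} (hN : 0 < N) (hq : 0 ≤ q) :
    ‖min ‖y‖ N ^ q‖ ≤ N ^ q := by
  have hmin : 0 ≤ min ‖y‖ N := le_min (norm_nonneg y) hN.le
  rw [Real.norm_of_nonneg (by positivity)]
  exact Real.rpow_le_rpow hmin (min_le_right _ _) hq

theorem continuous_min_norm_rpow (N : ℝ) (hq : 0 ≤ q) :
    Continuous fun y : E => min ‖y‖ N ^ q :=
  (continuous_norm.min continuous_const).rpow_const fun _ => Or.inr hq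

theorem integrable_min_norm_rpow (hf : AEStronglyMeasurable f μ) {N : ℝ} (hN : 0 < N)
    (hq : 0 ≤ q) : Integrable (fun x => min ‖f x‖ N ^ q) μ :=
  .of_bound ((continuous_min_norm_rpow N hq).comp_aestronglyMeasurable hf) (N ^ q)
    (Eventually.of_forall fun x => norm_min_norm_rpow_le (f x) hN hq)

theorem integral_norm_rpow_le_integral_min_norm_rpow_add (hf : MemLp f (.ofReal p) μ) (hq : 0 ≤ q)
    (hqp : q ≤ p) {N : ℝ} (hN : 0 < N) :
    ∫ x, ‖f x‖ ^ q ∂μ ≤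
      (∫ x, min ‖f x‖ N ^ q ∂μ) + N ^ (q - p) * ∫ x, ‖f x‖ ^ p ∂μ := by
  have hmin := integrable_min_norm_rpow hf.1 hN hq
  have hp := (integrable_norm_rpow_of_memLp hf (hq.trans hqp) le_rfl).const_mul (N ^ (q - p))
  rw [← integral_const_mul, ← integral_add hmin hp]
  exact integral_mono (integrable_norm_rpow_of_memLp hf hq hqp) (hmin.add hp)
    fun x => rpow_le_min_rpow_add (norm_nonneg _) hN hqp

variable {ι : Type*} {u : Filter ι} [NeBot u] [IsCountablyGenerated u] {φ : ι → Ω → E} {C : ℝ}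
  (hφ : ∀ i, MemLp (φ i) (.ofReal p) μ) (hC : ∀ i, ∫ x, ‖φ i x‖ ^ p ∂μ ≤ C)
  (hlim : ∀ᵐ x ∂μ, Tendsto (fun i => φ i x) u (𝓝 (f x)))

include hφ hC hlim

omit [IsFiniteMeasure μ] in
theorem memLp_of_tendsto_ae_of_integral_norm_rpow_le (hp : 0 < p) : MemLp f (.ofReal p) μ := by
  have hm (i : ι) := (hφ i).1
  refine ⟨aestronglyMeasurable_of_tendsto_ae u hm hlim, lt_of_le_of_lt
    (Lp.eLpNorm_le_of_ae_tendsto (C := .ofReal (C ^ p⁻¹)) (.of_forall fun i => ?_) hm hlim)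
    ENNReal.ofReal_lt_top⟩
  rw [(hφ i).eLpNorm_eq_integral_rpow_norm (by simpa using hp) ENNReal.ofReal_ne_top,
    ENNReal.toReal_ofReal hp.le]
  gcongr
  exact hC i

theorem le_integral_norm_rpow_of_tendsto_ae (hq : 0 < q) (hqp : q < p) {l : ℝ}
    (hl : ∀ᶠ i in u, l ≤ ∫ x, ‖φ i x‖ ^ q ∂μ) : l ≤ ∫ x, ‖f x‖ ^ q ∂μ := by
  have hf := memLp_of_tendsto_ae_of_integral_norm_rpow_le hφ hC hlim (hq.trans hqp)
  have htruncate (N : ℝ) (hN : 0 < N) : l ≤ (∫ x, ‖f x‖ ^ q ∂μ) + N ^ (q - p) * C := by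
    have htendsto : Tendsto (fun i => (∫ x, min ‖φ i x‖ N ^ q ∂μ) + N ^ (q - p) * C) u
        (𝓝 ((∫ x, min ‖f x‖ N ^ q ∂μ) + N ^ (q - p) * C)) := by
      refine (tendsto_integral_filter_of_dominated_convergence (fun _ => N ^ q)
        (.of_forall fun i => (integrable_min_norm_rpow (hφ i).1 hN hq.le).1)
        (.of_forall fun i => .of_forall fun x => norm_min_norm_rpow_le (φ i x) hN hq.le)
        (integrable_const _) ?_).add_const _
      filter_upwards [hlim] with x hx
      exact ((continuous_min_norm_rpow N hq.le).tendsto _).comp hx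
    calc l ≤ (∫ x, min ‖f x‖ N ^ q ∂μ) + N ^ (q - p) * C := by
          refine ge_of_tendsto htendsto (hl.mono fun i hi => hi.trans ?_)
          refine (integral_norm_rpow_le_integral_min_norm_rpow_add (hφ i) hq.le hqp.le hN).trans ?_
          gcongr
          exact hC i
      _ ≤ (∫ x, ‖f x‖ ^ q ∂μ) + N ^ (q - p) * C := by
          gcongr ?_ + _
          refine integral_mono (integrable_min_norm_rpow hf.1 hN hq.le)
            (integrable_norm_rpow_of_memLp hf hq.le hqp.le) fun x => ?_
          exact Real.rpow_le_rpow (le_min (norm_nonneg _) hN.le) (min_le_left _ _) hq.le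
  have hvanish : Tendsto (fun N : ℝ => (∫ x, ‖f x‖ ^ q ∂μ) + N ^ (q - p) * C) atTop
      (𝓝 (∫ x, ‖f x‖ ^ q ∂μ)) := by
    have := ((tendsto_rpow_neg_atTop (sub_pos.2 hqp)).mul_const C).const_add (∫ x, ‖f x‖ ^ q ∂μ)
    simpa only [neg_sub, zero_mul, add_zero] using this
  exact ge_of_tendsto hvanish ((eventually_gt_atTop 0).mono htruncate)

end Limits

theorem integral_le_of_forall_symm_subinterval_le {φ : ℝ → ℝ} {R b : ℝ} (hR : 0 < R)
    (hφ : ∀ x, 0 ≤ φ x) (h : ∀ ρ ∈ Set.Ioo 0 R, ∫ x in (-ρ)..ρ, φ x ≤ b) :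
    ∫ x in (-R)..R, φ x ≤ b := by
  have hmem : Set.Ioo 0 R ∈ 𝓝[<] R := Ioo_mem_nhdsLT hR
  by_cases hint : IntervalIntegrable φ volume (-R) R
  · have htendsto : Tendsto (fun ρ : ℝ => ρ) (𝓝[<] R) (𝓝 R) := nhdsWithin_le_nhds
    have hlim := (aecover_Ioc_of_Ioc htendsto.neg htendsto).integral_tendsto_of_countably_generated
      hint.1
    rw [intervalIntegral.integral_of_le (by linarith)]
    refine le_of_tendsto hlim ?_
    filter_upwards [hmem] with ρ hρ
    rw [Measure.restrict_restrict measurableSet_Ioc, Set.inter_eq_left.2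
      (Set.Ioc_subset_Ioc (neg_le_neg hρ.2.le) hρ.2.le),
      ← intervalIntegral.integral_of_le (by linarith [hρ.1])]
    exact h ρ hρ
  · rw [intervalIntegral.integral_undef hint]
    obtain ⟨ρ, hρ⟩ := Set.nonempty_Ioo.2 hR
    exact (intervalIntegral.integral_nonneg (by linarith [hρ.1]) fun x _ => hφ x).trans (h ρ hρ)

theorem memLp_restrict_Ioc_of_continuousOn {E : Type*} [NormedAddCommGroup E] {F : ℝ → E} {a b : ℝ}
    (hF : ContinuousOn F (Set.Icc a b)) (P : ENNReal) :
    MemLp F P (volume.restrict (Set.Ioc a b)) := by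
  obtain ⟨C, hC⟩ := isCompact_Icc.exists_bound_of_continuousOn hF
  refine .of_bound ((hF.mono Set.Ioc_subset_Icc_self).aestronglyMeasurable measurableSet_Ioc) C ?_
  exact (ae_restrict_mem measurableSet_Ioc).mono fun x hx => hC x (Set.Ioc_subset_Icc_self hx)

theorem ofReal_mul_exp_mem_ball {x R : ℝ} (hx : |x| < R) (θ : ℝ) :
    (x * exp (θ * I) : ℂ) ∈ ball 0 R := by
  rwa [mem_ball_zero_iff, norm_mul, norm_exp_ofReal_mul_I, norm_real, mul_one]

theorem continuousAt_half_mul_inv_cos_rpow {p : ℝ} (hp : 1 < p) :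
    ContinuousAt (fun q : ℝ => 1 / 2 * (Real.cos (π / (2 * q)))⁻¹ ^ q) p := by
  have hcos : ContinuousAt (fun q : ℝ => (Real.cos (π / (2 * q)))⁻¹) p :=
    (Real.continuous_cos.continuousAt.comp
      (continuousAt_const.div (by fun_prop) (by positivity))).inv₀ (cos_pi_div_two_mul_pos hp).ne'
  exact continuousAt_const.mul (hcos.rpow continuousAt_id (.inr (by positivity)))

section UnitDisc

variable {h g f : ℂ → ℂ} {F : ℝ → ℂ} {p q r ρ C : ℝ}

theorem memLp_diameter (hf : ContinuousOn f (ball 0 1)) (hρ : ρ < 1) (t : ℝ) (P : ENNReal) :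
    MemLp (fun x : ℝ => f (x * exp (t * I))) P (volume.restrict (Set.Ioc (-ρ) ρ)) :=
  memLp_restrict_Ioc_of_continuousOn (hf.comp (by fun_prop) fun _ hx =>
    ofReal_mul_exp_mem_ball ((abs_le.2 hx).trans_lt hρ) t) P

theorem memLp_circle (hf : ContinuousOn f (ball 0 1)) (hr : |r| < 1) (P : ENNReal) :
    MemLp (fun θ : ℝ => f (r * exp (θ * I))) P (volume.restrict (Set.Ioc 0 (2 * π))) :=
  memLp_restrict_Ioc_of_continuousOn
    (hf.comp_continuous (by fun_prop) (ofReal_mul_exp_mem_ball hr)).continuousOn P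

theorem continuousOn_of_eq_add_conj {s : Set ℂ} (hh : ContinuousOn h s) (hg : ContinuousOn g s)
    (hf : ∀ z ∈ s, f z = h z + conj (g z)) : ContinuousOn f s :=
  (hh.add (continuous_conj.comp_continuousOn hg)).congr hf

theorem integral_norm_rpow_diameter_le_integral_circle (hh : DifferentiableOn ℂ h (ball 0 1))
    (hg : DifferentiableOn ℂ g (ball 0 1)) (hf : ∀ z ∈ ball 0 1, f z = h z + conj (g z))
    (hr₀ : 0 < r) (hr₁ : r < 1) (hq₁ : 1 < q) (hq₂ : q < 2) (t : ℝ) :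
    (∫ x in (-r)..r, ‖f (x * exp (t * I))‖ ^ q) ≤
      1 / 2 * (Real.cos (π / (2 * q)))⁻¹ ^ q *
        ∫ θ in (0 : ℝ)..2 * π, ‖f (r * exp (θ * I))‖ ^ q := by
  have hball : closure (ball (0 : ℂ) r) ⊆ ball 0 1 := by
    rw [closure_ball _ hr₀.ne']
    exact Metric.closedBall_subset_ball hr₁
  have hdiameter : (∫ x in (-r)..r, ‖f (x * exp (t * I))‖ ^ q) =
      ∫ x in (-r)..r, ‖h (x * exp (t * I)) + conj (g (x * exp (t * I)))‖ ^ q := by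
    refine intervalIntegral.integral_congr fun x hx => ?_
    rw [Set.uIcc_of_le (by linarith)] at hx
    simp only [hf _ (ofReal_mul_exp_mem_ball ((abs_le.2 hx).trans_lt hr₁) t)]
  have hcircle : π * circleAverage (fun z => ‖h z + conj (g z)‖ ^ q) 0 r =
      1 / 2 * ∫ θ in (0 : ℝ)..2 * π, ‖f (r * exp (θ * I))‖ ^ q := by
    have hπ : π * (2 * π)⁻¹ = 1 / 2 := by field_simp
    simp only [hf _ (ofReal_mul_exp_mem_ball (by rwa [abs_of_pos hr₀]) _), circleAverage, circleMap,
      zero_add, smul_eq_mul, ← mul_assoc, hπ]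
  have hcos := cos_pi_div_two_mul_pos hq₁
  calc (∫ x in (-r)..r, ‖f (x * exp (t * I))‖ ^ q)
      ≤ r * ((Real.cos (π / (2 * q)))⁻¹ ^ q *
          (π * circleAverage (fun z => ‖h z + conj (g z)‖ ^ q) 0 r)) :=
        hdiameter.trans_le (integral_norm_add_conj_rpow_diameter_le hr₀ hq₁ hq₂
          (hh.mono hball).diffContOnCl (hg.mono hball).diffContOnCl t)
    _ = r * (1 / 2 * (Real.cos (π / (2 * q)))⁻¹ ^ q *
          ∫ θ in (0 : ℝ)..2 * π, ‖f (r * exp (θ * I))‖ ^ q) := by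
        rw [hcircle]
        ring
    _ ≤ _ := by
        refine mul_le_of_le_one_left (mul_nonneg (by positivity) ?_) hr₁.le
        exact intervalIntegral.integral_nonneg two_pi_pos.le fun θ _ => by positivity

theorem integral_norm_rpow_diameter_le_of_lt (hh : DifferentiableOn ℂ h (ball 0 1))
    (hg : DifferentiableOn ℂ g (ball 0 1)) (hf : ∀ z ∈ ball 0 1, f z = h z + conj (g z))
    {r : ℕ → ℝ} (hr : ∀ n, r n ∈ Set.Ioo 0 1) (hr₁ : Tendsto r atTop (𝓝 1))
    (hC : ∀ n, ∫ θ in (0 : ℝ)..2 * π, ‖f (r n * exp (θ * I))‖ ^ p ≤ C)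
    (hF : ∀ᵐ θ : ℝ, Tendsto (fun n => f (r n * exp (θ * I))) atTop (𝓝 (F θ)))
    (hq : 1 < q) (hqp : q < p) (hp : p ≤ 2) (hρ : ρ ∈ Set.Ioo 0 1) (t : ℝ) :
    (∫ x in (-ρ)..ρ, ‖f (x * exp (t * I))‖ ^ q) ≤
      1 / 2 * (Real.cos (π / (2 * q)))⁻¹ ^ q * ∫ θ in (0 : ℝ)..2 * π, ‖F θ‖ ^ q := by
  have hfc := continuousOn_of_eq_add_conj hh.continuousOn hg.continuousOn hf
  have hcos := cos_pi_div_two_mul_pos hq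
  have hK : 0 < 1 / 2 * (Real.cos (π / (2 * q)))⁻¹ ^ q := by positivity
  simp only [intervalIntegral.integral_of_le two_pi_pos.le] at hC ⊢
  rw [← div_le_iff₀' hK]
  refine le_integral_norm_rpow_of_tendsto_ae (u := atTop)
    (fun n => memLp_circle hfc (abs_lt.2 ⟨by linarith [(hr n).1], (hr n).2⟩) _) hC
    (ae_restrict_of_ae hF) (by linarith) hqp ?_
  filter_upwards [hr₁.eventually_const_lt hρ.2] with n hn
  obtain ⟨hn₀, hn₁⟩ := hr n
  have hint : IntervalIntegrable (fun x : ℝ => ‖f (x * exp (t * I))‖ ^ q) volume (-r n) (r n) := by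
    rw [intervalIntegrable_iff_integrableOn_Ioc_of_le (by linarith)]
    exact integrable_norm_rpow_of_memLp (memLp_diameter hfc hn₁ t _) (by linarith) le_rfl
  rw [div_le_iff₀' hK, ← intervalIntegral.integral_of_le two_pi_pos.le]
  calc (∫ x in (-ρ)..ρ, ‖f (x * exp (t * I))‖ ^ q)
      ≤ ∫ x in (-r n)..r n, ‖f (x * exp (t * I))‖ ^ q :=
        intervalIntegral.integral_mono_interval (by linarith) (by linarith [hρ.1]) hn.le
          (.of_forall fun x => by positivity) hint
    _ ≤ _ := integral_norm_rpow_diameter_le_integral_circle hh hg hf hn₀ hn₁ hq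
        (hqp.trans_le hp) t

theorem integral_norm_rpow_diameter_le_s4 (hh : DifferentiableOn ℂ h (ball 0 1))
    (hg : DifferentiableOn ℂ g (ball 0 1)) (hf : ∀ z ∈ ball 0 1, f z = h z + conj (g z))
    {r : ℕ → ℝ} (hr : ∀ n, r n ∈ Set.Ioo 0 1) (hr₁ : Tendsto r atTop (𝓝 1))
    (hC : ∀ n, ∫ θ in (0 : ℝ)..2 * π, ‖f (r n * exp (θ * I))‖ ^ p ≤ C)
    (hF : ∀ᵐ θ : ℝ, Tendsto (fun n => f (r n * exp (θ * I))) atTop (𝓝 (F θ)))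
    (hp₁ : 1 < p) (hp₂ : p ≤ 2) (hρ : ρ ∈ Set.Ioo 0 1) (t : ℝ) :
    (∫ x in (-ρ)..ρ, ‖f (x * exp (t * I))‖ ^ p) ≤
      1 / 2 * (Real.cos (π / (2 * p)))⁻¹ ^ p * ∫ θ in (0 : ℝ)..2 * π, ‖F θ‖ ^ p := by
  have hfc := continuousOn_of_eq_add_conj hh.continuousOn hg.continuousOn hf
  have hp₀ : 0 < p := by linarith
  have hbelow : ∀ᶠ q in 𝓝[<] p, (∫ x in (-ρ)..ρ, ‖f (x * exp (t * I))‖ ^ q) ≤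
      1 / 2 * (Real.cos (π / (2 * q)))⁻¹ ^ q * ∫ θ in (0 : ℝ)..2 * π, ‖F θ‖ ^ q := by
    filter_upwards [Ioo_mem_nhdsLT hp₁] with q hq
    exact integral_norm_rpow_diameter_le_of_lt hh hg hf hr hr₁ hC hF hq.1 hq.2 hp₂ hρ t
  simp only [intervalIntegral.integral_of_le two_pi_pos.le,
    intervalIntegral.integral_of_le (show -ρ ≤ ρ by linarith [hρ.1])] at hC hbelow ⊢
  have hFmem : MemLp F (.ofReal p) (volume.restrict (Set.Ioc 0 (2 * π))) :=
    memLp_of_tendsto_ae_of_integral_norm_rpow_le (u := atTop)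
      (fun n => memLp_circle hfc (abs_lt.2 ⟨by linarith [(hr n).1], (hr n).2⟩) _) hC
      (ae_restrict_of_ae hF) hp₀
  exact le_of_tendsto_of_tendsto
    (tendsto_integral_norm_rpow_nhdsLT_s4 (memLp_diameter hfc hρ.2 t _) hp₀)
    (((continuousAt_half_mul_inv_cos_rpow hp₁).tendsto.mono_left nhdsWithin_le_nhds).mul
      (tendsto_integral_norm_rpow_nhdsLT_s4 hFmem hp₀)) hbelow

theorem harmonic_riesz_fejer_small_p_general (hp₁ : 1 < p) (hp₂ : p ≤ 2)
    (hh : AnalyticOn ℂ h (ball 0 1)) (hg : AnalyticOn ℂ g (ball 0 1))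
    (hf : ∀ z ∈ ball 0 1, f z = h z + conj (g z))
    (hHp : ∃ C : ℝ, ∃ᶠ r : ℝ in 𝓝[<] 1, ∫ θ in (0 : ℝ)..2 * π, ‖f (r * exp (θ * I))‖ ^ p ≤ C)
    (hF : ∀ᵐ θ : ℝ, Tendsto (fun r : ℝ => f (r * exp (θ * I))) (𝓝[<] 1) (𝓝 (F θ))) (t : ℝ) :
    (∫ x in (-1 : ℝ)..1, ‖f (x * exp (t * I))‖ ^ p) ≤
      1 / 2 * (Real.cos (π / (2 * p)))⁻¹ ^ p * ∫ θ in (0 : ℝ)..2 * π, ‖F θ‖ ^ p := by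
  obtain ⟨C, hC⟩ := hHp
  obtain ⟨r, hr₁, hr⟩ := exists_seq_forall_of_frequently
    (hC.and_eventually (Ioo_mem_nhdsLT (zero_lt_one' ℝ)))
  refine integral_le_of_forall_symm_subinterval_le one_pos (fun x => by positivity) fun ρ hρ => ?_
  exact integral_norm_rpow_diameter_le_s4 hh.differentiableOn hg.differentiableOn hf
    (fun n => (hr n).2) (hr₁.mono_right nhdsWithin_le_nhds) (fun n => (hr n).1)
    (hF.mono fun θ hθ => hθ.comp hr₁) hp₁ hp₂ hρ t

end UnitDisc

/-- **Harmonic Riesz–Fejér inequality, `1 < p ≤ 2`.** If `f = h + conj g` is harmonic on the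
unit disk (`h, g` analytic, `g 0 = 0`), belongs to the harmonic Hardy space `h^p`, and has a.e.
radial boundary values `F`, then for all real `t`,
`∫_{-1}^{1} |f(x e^{it})|^p dx ≤ (1/2) sec^p (π/(2p)) ∫₀^{2π} |F(θ)|^p dθ`. -/
theorem harmonic_riesz_fejer_small_p (p : ℝ) (hp1 : 1 < p) (hp2 : p ≤ 2)
    (h g f : ℂ → ℂ) (F : ℝ → ℂ)
    (hh : AnalyticOn ℂ h (Metric.ball 0 1)) (hg : AnalyticOn ℂ g (Metric.ball 0 1))
    (hg0 : g 0 = 0) (hf : ∀ z ∈ Metric.ball (0:ℂ) 1, f z = h z + starRingEnd ℂ (g z))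
    (hHp : ∃ C : ℝ, ∀ r : ℝ, 0 ≤ r → r < 1 →
      (∫ θ in (0:ℝ)..(2 * π), ‖f ((r : ℂ) * Complex.exp (θ * Complex.I))‖ ^ p) ≤ C)
    (hF : ∀ᵐ θ : ℝ, Tendsto (fun r : ℝ => f ((r : ℂ) * Complex.exp (θ * Complex.I)))
      (nhdsWithin 1 (Set.Iio 1)) (nhds (F θ))) (t : ℝ) :
    (∫ x in (-1:ℝ)..1, ‖f ((x : ℂ) * Complex.exp (t * Complex.I))‖ ^ p) ≤
      (1 / 2) * (Real.cos (π / (2 * p)))⁻¹ ^ p * ∫ θ in (0:ℝ)..(2 * π), ‖F θ‖ ^ p :=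
  harmonic_riesz_fejer_small_p_general hp1 hp2 hh hg hf
    (hHp.imp fun _ hC => Eventually.frequently <|
      mem_of_superset (Ioo_mem_nhdsLT one_pos) fun r hr => hC r hr.1.le hr.2) hF t
end
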